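/- arXiv:2106.04962 — 2 statements merged into one kernel-verified Lean document; each statement's English description precedes it below -/
import Mathlib

section
/- Let ψ be a Ma-Minda function with ψ(𝔻) a convex set, let k ≥ 2, and let g_k(z) = (z − z^{k+1})/(1 − z) = z + z² + ⋯ + z^k. Suppose r ∈ (0, 1] is such that the function z ↦ g_k(rz)/r belongs to S*(ψ). If f(z) = z + Σ_{n≥2} aₙzⁿ ∈ C(ψ), then the k-th section f_k(z) = z + Σ_{n=2}^k aₙzⁿ satisfies: the function z ↦ f_k(rz)/r belongs to S*(ψ); that is, f_k ∈ S*(ψ) on |z| < r. -/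
open Complex Metric Set

noncomputable section

/-- The open unit disk in `ℂ`. -/
def 𝔻 : Set ℂ := Metric.ball 0 1

/-- The class `𝒜` of analytic functions on `𝔻` normalized by `f 0 = 0`, `f' 0 = 1`. -/
def IsClassA (f : ℂ → ℂ) : Prop :=
  DifferentiableOn ℂ f 𝔻 ∧ f 0 = 0 ∧ deriv f 0 = 1

/-- `g` is subordinate to `F` on the unit disk. -/
def Subordinate (g F : ℂ → ℂ) : Prop :=
  ∃ ω : ℂ → ℂ, DifferentiableOn ℂ ω 𝔻 ∧ ω 0 = 0 ∧ (∀ z ∈ 𝔻, ω z ∈ 𝔻) ∧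
    ∀ z ∈ 𝔻, g z = F (ω z)

/-- `ψ` is a Ma-Minda function: analytic and univalent on `𝔻`, `Re ψ > 0`, `ψ 0 = 1`,
`ψ' 0 > 0`, with real Taylor coefficients (expressed via `ψ (conj z) = conj (ψ z)`). -/
def MaMinda (ψ : ℂ → ℂ) : Prop :=
  DifferentiableOn ℂ ψ 𝔻 ∧ Set.InjOn ψ 𝔻 ∧ (∀ z ∈ 𝔻, 0 < (ψ z).re) ∧
    ψ 0 = 1 ∧ 0 < (deriv ψ 0).re ∧ (deriv ψ 0).im = 0 ∧
    (∀ z ∈ 𝔻, ψ (starRingEnd ℂ z) = starRingEnd ℂ (ψ z))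

/-- The Ma-Minda starlike class `S*(ψ)`. -/
def StarlikeMM (ψ f : ℂ → ℂ) : Prop :=
  IsClassA f ∧ (∀ z ∈ 𝔻, z ≠ 0 → f z ≠ 0) ∧
    Subordinate (fun z => if z = 0 then 1 else z * deriv f z / f z) ψ

/-- The Ma-Minda convex class `C(ψ)`. -/
def ConvexMM (ψ f : ℂ → ℂ) : Prop :=
  IsClassA f ∧ (∀ z ∈ 𝔻, deriv f z ≠ 0) ∧
    Subordinate (fun z => 1 + z * deriv (deriv f) z / deriv f z) ψ

/-- `f` is starlike of order `α`. -/
def StarlikeOrder (α : ℝ) (f : ℂ → ℂ) : Prop :=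
  IsClassA f ∧ (∀ z ∈ 𝔻, z ≠ 0 → f z ≠ 0) ∧
    ∀ z ∈ 𝔻, z ≠ 0 → α < (z * deriv f z / f z).re

/-- `f` is a (normalized) convex function on `𝔻`. -/
def IsConvexFn (f : ℂ → ℂ) : Prop :=
  IsClassA f ∧ (∀ z ∈ 𝔻, deriv f z ≠ 0) ∧
    ∀ z ∈ 𝔻, 0 < (1 + z * deriv (deriv f) z / deriv f z).re

/-!
The rescaled section `F` of `f` is the Hadamard product of the convex function `f` with the rescaled
section `g` of the geometric series, so the theorem is an instance of the Ruscheweyh–Sheil-Small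
principle for a convex `f` and a starlike `g`.

Put `z = w²`, `φ(ζ) = f(wζ)`, `q(ζ) = g(w ζ̄)` and `B = z g' / g`. Then `F(z)` is the mean over
the unit circle of `h = φ q`, and `z F'(z)` is the mean of `h` weighted by `B(w ζ̄)`. A chord of a
convex curve separates its two arcs, and a starlike curve meets every line through the origin
exactly twice. Matching the two sign changes shows that `h` has nonzero mean and that its Szegő
projection `X` on a slightly smaller circle, normalized to mean one, never satisfies `2 Re X = 1`.
By connectedness `2 Re X - 1` is then a probability density on the circle, against which `z F' / F`
is an average of values of `B`. These lie in the convex set `ψ(𝔻)`, hence so does `z F' / F`, and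
composing with `ψ⁻¹` gives the subordination.
-/

open MeasureTheory
open Real (circleAverage)
open scoped Real ComplexConjugate

/-- `Ψ` is a continuous argument of the closed curve `γ`, of period `2π`, which winds strictly
counterclockwise, exactly once, around the origin. It encodes starlikeness of a curve and, applied
to the tangent vector, convexity. -/
structure IsAngularLift (γ : ℝ → ℂ) (Ψ : ℝ → ℝ) : Prop where
  ne_zero : ∀ t, γ t ≠ 0
  polar : ∀ t, γ t = ‖γ t‖ * cexp (Ψ t * I)
  strictMono : StrictMono Ψ
  continuous : Continuous Ψ
  add_two_pi : ∀ t, Ψ (t + 2 * π) = Ψ t + 2 * π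

lemma im_conj_mul_comm (z w : ℂ) : (conj z * w).im = -(conj w * z).im := by
  simp only [mul_im, conj_re, conj_im]
  ring

namespace IsAngularLift

variable {γ T u : ℝ → ℂ} {Ψ Θ : ℝ → ℝ}

lemma im_conj_mul (h : IsAngularLift γ Ψ) (x y : ℝ) :
    (conj (γ x) * γ y).im = ‖γ x‖ * ‖γ y‖ * Real.sin (Ψ y - Ψ x) := by
  have hxy : conj (γ x) * γ y = (‖γ x‖ * ‖γ y‖ : ℝ) * cexp ((Ψ y - Ψ x : ℝ) * I) := by
    conv_lhs => rw [h.polar x, h.polar y, map_mul, conj_ofReal, ← exp_conj, map_mul, conj_ofReal,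
      conj_I]
    have he : ((Ψ y - Ψ x : ℝ) : ℂ) * I = Ψ x * -I + Ψ y * I := by push_cast; ring
    rw [he, Complex.exp_add]
    push_cast
    ring
  rw [hxy, im_ofReal_mul, exp_ofReal_mul_I_im]

lemma norm_mul_norm_pos (h : IsAngularLift γ Ψ) (x y : ℝ) : 0 < ‖γ x‖ * ‖γ y‖ :=
  mul_pos (norm_pos_iff.2 (h.ne_zero x)) (norm_pos_iff.2 (h.ne_zero y))

lemma im_conj_mul_pos (h : IsAngularLift γ Ψ) {x y : ℝ} (h₁ : Ψ x < Ψ y) (h₂ : Ψ y < Ψ x + π) :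
    0 < (conj (γ x) * γ y).im := by
  rw [h.im_conj_mul]
  exact mul_pos (h.norm_mul_norm_pos x y)
    (Real.sin_pos_of_pos_of_lt_pi (by linarith) (by linarith))

lemma im_conj_mul_neg (h : IsAngularLift γ Ψ) {x y : ℝ} (h₁ : Ψ x + π < Ψ y)
    (h₂ : Ψ y < Ψ x + 2 * π) : (conj (γ x) * γ y).im < 0 := by
  rw [h.im_conj_mul, ← Real.sin_sub_two_pi]
  exact mul_neg_of_pos_of_neg (h.norm_mul_norm_pos x y)
    (Real.sin_neg_of_neg_of_neg_pi_lt (by linarith) (by linarith))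

lemma eq_add_pi_of_im_conj_mul_eq_zero (h : IsAngularLift γ Ψ) {x y : ℝ} (h₁ : Ψ x < Ψ y)
    (h₂ : Ψ y < Ψ x + 2 * π) (h₀ : (conj (γ x) * γ y).im = 0) : Ψ y = Ψ x + π := by
  rcases lt_trichotomy (Ψ y) (Ψ x + π) with hlt | heq | hgt
  · exact absurd h₀ (h.im_conj_mul_pos h₁ hlt).ne'
  · exact heq
  · exact absurd h₀ (h.im_conj_mul_neg hgt h₂).ne

lemma exists_eq_add_pi (h : IsAngularLift γ Ψ) (x : ℝ) :
    ∃ y ∈ Ioo x (x + 2 * π), Ψ y = Ψ x + π :=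
  intermediate_value_Ioo (by linarith [Real.pi_pos]) h.continuous.continuousOn
    ⟨by linarith [Real.pi_pos], by linarith [Real.pi_pos, h.add_two_pi x]⟩

end IsAngularLift

section Chord

variable {γ T u : ℝ → ℂ} {Ψ Θ : ℝ → ℝ}

lemma hasDerivAt_im_mul (d : ℂ) {v : ℂ} {t : ℝ} (hu : HasDerivAt u v t) :
    HasDerivAt (fun t => (d * u t).im) (d * v).im t :=
  imCLM.hasFDerivAt.comp_hasDerivAt t (hu.const_mul d)

lemma continuous_im_mul (d : ℂ) (hu : ∀ t, HasDerivAt u (T t) t) :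
    Continuous fun t => (d * u t).im :=
  continuous_iff_continuousAt.2 fun t => (hasDerivAt_im_mul d (hu t)).continuousAt

lemma strictMonoOn_im_mul {d : ℂ} {x y : ℝ} (hu : ∀ t, HasDerivAt u (T t) t)
    (h : ∀ t ∈ Ioo x y, 0 < (d * T t).im) : StrictMonoOn (fun t => (d * u t).im) (Icc x y) := by
  refine strictMonoOn_of_deriv_pos (convex_Icc x y) (continuous_im_mul d hu).continuousOn ?_
  intro t ht
  rw [interior_Icc] at ht
  exact (hasDerivAt_im_mul d (hu t)).deriv ▸ h t ht

lemma strictAntiOn_im_mul {d : ℂ} {x y : ℝ} (hu : ∀ t, HasDerivAt u (T t) t)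
    (h : ∀ t ∈ Ioo x y, (d * T t).im < 0) : StrictAntiOn (fun t => (d * u t).im) (Icc x y) := by
  refine strictAntiOn_of_deriv_neg (convex_Icc x y) (continuous_im_mul d hu).continuousOn ?_
  intro t ht
  rw [interior_Icc] at ht
  exact (hasDerivAt_im_mul d (hu t)).deriv ▸ h t ht

lemma exists_tangent_halfPlane (hT : IsAngularLift T Θ) (hu : ∀ t, HasDerivAt u (T t) t)
    (hper : Function.Periodic u (2 * π)) (P : ℝ) :
    ∃ d : ℂ, ∀ t ∈ Ioo P (P + 2 * π), (d * u P).im < (d * u t).im := by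
  obtain ⟨m, hm, hΘm⟩ := hT.exists_eq_add_pi P
  have hup : StrictMonoOn (fun t => (conj (T P) * u t).im) (Icc P m) :=
    strictMonoOn_im_mul hu fun t ht =>
      hT.im_conj_mul_pos (hT.strictMono ht.1) (hΘm ▸ hT.strictMono ht.2)
  have hdown : StrictAntiOn (fun t => (conj (T P) * u t).im) (Icc m (P + 2 * π)) :=
    strictAntiOn_im_mul hu fun t ht =>
      hT.im_conj_mul_neg (hΘm ▸ hT.strictMono ht.1) (hT.add_two_pi P ▸ hT.strictMono ht.2)
  refine ⟨conj (T P), fun t ht => ?_⟩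
  rcases le_total t m with htm | htm
  · exact hup ⟨le_rfl, hm.1.le⟩ ⟨ht.1.le, htm⟩ ht.1
  · simpa only [hper P] using hdown ⟨htm, ht.2.le⟩ ⟨hm.2.le, le_rfl⟩ ht.2

lemma exists_parallel_tangents (hT : IsAngularLift T Θ) (hu : ∀ t, HasDerivAt u (T t) t)
    (hper : Function.Periodic u (2 * π)) {P s : ℝ} (hs : s ∈ Ioo P (P + 2 * π)) :
    ∃ m₁ ∈ Ioo P s, ∃ m₂ ∈ Ioo s (P + 2 * π),
      (conj (T m₁) * u s).im = (conj (T m₁) * u P).im ∧ Θ m₂ = Θ m₁ + π := by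
  have hchord : (conj (u s - u P) * u P).im = (conj (u s - u P) * u s).im := by
    simp only [mul_im, conj_re, conj_im, sub_re, sub_im]
    ring
  obtain ⟨m₁, hm₁, hm₁'⟩ := exists_hasDerivAt_eq_zero hs.1
    (continuous_im_mul _ hu).continuousOn hchord fun t _ => hasDerivAt_im_mul _ (hu t)
  rw [im_conj_mul_comm, neg_eq_zero, mul_sub, sub_im, sub_eq_zero] at hm₁'
  obtain ⟨m₂, hm₂, hm₂'⟩ := exists_hasDerivAt_eq_zero hs.2
    (continuous_im_mul (conj (T m₁)) hu).continuousOn (by rw [hper, hm₁'])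
    fun t _ => hasDerivAt_im_mul _ (hu t)
  refine ⟨m₁, hm₁, m₂, hm₂, hm₁', hT.eq_add_pi_of_im_conj_mul_eq_zero ?_ ?_ hm₂'⟩
  · exact hT.strictMono (hm₁.2.trans hm₂.1)
  · exact hT.add_two_pi m₁ ▸ hT.strictMono (by linarith [hm₁.1, hm₂.2])

lemma exists_chord_separating (hT : IsAngularLift T Θ) (hu : ∀ t, HasDerivAt u (T t) t)
    (hper : Function.Periodic u (2 * π)) {P s : ℝ} (hs : s ∈ Ioo P (P + 2 * π)) :
    ∃ d : ℂ, (∀ t ∈ Ioo P s, (d * u P).im < (d * u t).im) ∧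
      ∀ t ∈ Ioo s (P + 2 * π), (d * u t).im < (d * u P).im := by
  obtain ⟨m₁, hm₁, m₂, hm₂, hchord, hΘ⟩ := exists_parallel_tangents hT hu hper hs
  have hΘP : Θ m₂ < Θ P + 2 * π := hT.add_two_pi P ▸ hT.strictMono hm₂.2
  have hdown : StrictAntiOn (fun t => (conj (T m₁) * u t).im) (Icc P m₁) :=
    strictAntiOn_im_mul hu fun t ht => by
      rw [im_conj_mul_comm, neg_lt_zero]
      exact hT.im_conj_mul_pos (hT.strictMono ht.2) (by linarith [hT.strictMono ht.1])
  have hup : StrictMonoOn (fun t => (conj (T m₁) * u t).im) (Icc m₁ m₂) :=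
    strictMonoOn_im_mul hu fun t ht =>
      hT.im_conj_mul_pos (hT.strictMono ht.1) (hΘ ▸ hT.strictMono ht.2)
  have hdown' : StrictAntiOn (fun t => (conj (T m₁) * u t).im) (Icc m₂ (P + 2 * π)) :=
    strictAntiOn_im_mul hu fun t ht => hT.im_conj_mul_neg (hΘ ▸ hT.strictMono ht.1)
      (hT.add_two_pi m₁ ▸ hT.strictMono (by linarith [ht.2, hm₁.1]))
  refine ⟨-conj (T m₁), fun t ht => ?_, fun t ht => ?_⟩ <;>
    simp only [neg_mul, neg_im, neg_lt_neg_iff]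
  · rcases le_total t m₁ with htm | htm
    · exact hdown ⟨le_rfl, hm₁.1.le⟩ ⟨ht.1.le, htm⟩ ht.1
    · exact hchord ▸ hup ⟨htm, (ht.2.trans hm₂.1).le⟩ ⟨hm₁.2.le, hm₂.1.le⟩ ht.2
  · rcases le_total t m₂ with htm | htm
    · exact hchord ▸ hup ⟨hm₁.2.le, hm₂.1.le⟩ ⟨(hm₁.2.trans ht.1).le, htm⟩ ht.1
    · simpa only [hper P] using hdown' ⟨htm, ht.2.le⟩ ⟨hm₂.2.le, le_rfl⟩ ht.2

lemma exists_line_separating (hT : IsAngularLift T Θ) (hu : ∀ t, HasDerivAt u (T t) t)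
    (hper : Function.Periodic u (2 * π)) {P s : ℝ} (hs : s ∈ Ioc P (P + 2 * π)) :
    ∃ d : ℂ, (∀ t ∈ Ioo P s, (d * u P).im < (d * u t).im) ∧
      ∀ t ∈ Ioo s (P + 2 * π), (d * u t).im < (d * u P).im := by
  rcases hs.2.lt_or_eq with hlt | rfl
  · exact exists_chord_separating hT hu hper ⟨hs.1, hlt⟩
  · obtain ⟨d, hd⟩ := exists_tangent_halfPlane hT hu hper P
    exact ⟨d, hd, by simp⟩

lemma exists_sign_change_of_antiperiodic {k : ℝ → ℝ} {c : ℝ} (hk : Function.Antiperiodic k c)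
    {P q m : ℝ} (hq : q ∈ Ico P (P + c)) (hm : m ∈ Ioo q (q + c))
    (hpos : ∀ t ∈ Ioo q m, 0 < k t) (hneg : ∀ t ∈ Ioo m (q + c), k t < 0) :
    ∃ s ∈ Ioc P (P + c), ∃ ε : ℝ, (∀ t ∈ Ioo P s, t ≠ q → 0 < ε * k t) ∧
      ∀ t ∈ Ioo s (P + c), t ≠ q → ε * k t < 0 := by
  obtain ⟨hPq, hqP⟩ := hq
  obtain ⟨hqm, hmq⟩ := hm
  have hshift : ∀ t, k t = -k (t + c) := fun t => by rw [hk, neg_neg]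
  have hneg' : ∀ t, q - c < t → t < m - c → k t < 0 := fun t h₁ h₂ => by
    rw [hshift, neg_lt_zero]; exact hpos _ ⟨by linarith, by linarith⟩
  have hpos' : ∀ t, m - c < t → t < q → 0 < k t := fun t h₁ h₂ => by
    rw [hshift, neg_pos]; exact hneg _ ⟨by linarith, by linarith⟩
  rcases le_or_gt m (P + c) with hmP | hmP
  · refine ⟨m, ⟨hPq.trans_lt hqm, hmP⟩, 1, fun t ht htq => ?_, fun t ht _ => ?_⟩ <;>
      rw [one_mul]
    · rcases htq.lt_or_gt with hlt | hgt
      · exact hpos' t (by linarith [ht.1]) hlt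
      · exact hpos t ⟨hgt, ht.2⟩
    · exact hneg t ⟨ht.1, by linarith [ht.2]⟩
  · refine ⟨m - c, ⟨by linarith, by linarith⟩, -1, fun t ht _ => ?_, fun t ht htq => ?_⟩ <;>
      rw [neg_one_mul]
    · exact neg_pos.2 (hneg' t (by linarith [ht.1]) ht.2)
    · rcases htq.lt_or_gt with hlt | hgt
      · exact neg_lt_zero.2 (hpos' t ht.1 hlt)
      · exact neg_lt_zero.2 (hpos t ⟨hgt, ht.2.trans hmP⟩)

lemma antiperiodic_sin_half_mul (hper : Function.Periodic γ (2 * π)) (q : ℝ) :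
    Function.Antiperiodic (fun t => Real.sin ((t - q) / 2) * (conj (γ q) * γ t).im) (2 * π) := by
  intro t
  have hhalf : (t + 2 * π - q) / 2 = (t - q) / 2 + π := by ring
  simp only [hper t, hhalf, Real.sin_add_pi, neg_mul]

lemma exists_sign_change_sin_half_mul (hγ : IsAngularLift γ Ψ) (hper : Function.Periodic γ (2 * π))
    {P q : ℝ} (hq : q ∈ Ico P (P + 2 * π)) :
    ∃ s ∈ Ioc P (P + 2 * π), ∃ ε : ℝ,
      (∀ t ∈ Ioo P s, t ≠ q → 0 < ε * (Real.sin ((t - q) / 2) * (conj (γ q) * γ t).im)) ∧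
      ∀ t ∈ Ioo s (P + 2 * π), t ≠ q →
        ε * (Real.sin ((t - q) / 2) * (conj (γ q) * γ t).im) < 0 := by
  obtain ⟨m, hm, hΨm⟩ := hγ.exists_eq_add_pi q
  have hsin : ∀ t, q < t → t < q + 2 * π → 0 < Real.sin ((t - q) / 2) := fun t h₁ h₂ =>
    Real.sin_pos_of_pos_of_lt_pi (by linarith) (by linarith)
  refine exists_sign_change_of_antiperiodic (antiperiodic_sin_half_mul hper q) hq hm
    (fun t ht => ?_) fun t ht => ?_
  · exact mul_pos (hsin t ht.1 (ht.2.trans hm.2))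
      (hγ.im_conj_mul_pos (hγ.strictMono ht.1) (hΨm ▸ hγ.strictMono ht.2))
  · exact mul_neg_of_pos_of_neg (hsin t (hm.1.trans ht.1) ht.2)
      (hγ.im_conj_mul_neg (hΨm ▸ hγ.strictMono ht.1) (hγ.add_two_pi q ▸ hγ.strictMono ht.2))

lemma exists_im_mul_sin_half_mul_im_pos (hT : IsAngularLift T Θ)
    (hu : ∀ t, HasDerivAt u (T t) t) (huper : Function.Periodic u (2 * π))
    (hγ : IsAngularLift γ Ψ) (hγper : Function.Periodic γ (2 * π))
    {P q : ℝ} (hq : q ∈ Ico P (P + 2 * π)) :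
    ∃ (d : ℂ) (s : ℝ), ∀ t ∈ Ioo P (P + 2 * π), t ≠ s → t ≠ q →
      0 < (d * (u t - u P)).im * (Real.sin ((t - q) / 2) * (conj (γ q) * γ t).im) := by
  obtain ⟨s, hs, ε, hpos, hneg⟩ := exists_sign_change_sin_half_mul hγ hγper hq
  obtain ⟨d, hd₁, hd₂⟩ := exists_line_separating hT hu huper hs
  refine ⟨ε * d, s, fun t ht hts htq => ?_⟩
  rw [mul_assoc (ε : ℂ), im_ofReal_mul, mul_assoc ε, mul_left_comm, mul_sub, sub_im]
  rcases hts.lt_or_gt with hlt | hgt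
  · exact mul_pos (sub_pos.2 (hd₁ t ⟨ht.1, hlt⟩)) (hpos t ⟨ht.1, hlt⟩ htq)
  · exact mul_pos_of_neg_of_neg (sub_neg.2 (hd₂ t ⟨hgt, ht.2⟩)) (hneg t ⟨hgt, ht.2⟩ htq)

end Chord

section ExistsLift

lemma hasDerivAt_integral_zero {β : ℝ → ℂ} (hβ : Continuous β) (t : ℝ) :
    HasDerivAt (fun x => ∫ u in (0 : ℝ)..x, β u) (β t) t :=
  intervalIntegral.integral_hasDerivAt_right (hβ.intervalIntegrable 0 t)
    hβ.aestronglyMeasurable.stronglyMeasurableAtFilter hβ.continuousAt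

lemma eq_mul_exp_integral {γ β : ℝ → ℂ} (hβ : Continuous β)
    (hγ : ∀ t, HasDerivAt γ (I * β t * γ t) t) (t : ℝ) :
    γ t = γ 0 * cexp (I * ∫ u in (0 : ℝ)..t, β u) := by
  have hconst : ∀ t, HasDerivAt (fun t => γ t * cexp (-(I * ∫ u in (0 : ℝ)..t, β u))) 0 t := by
    intro t
    refine ((hγ t).mul ((hasDerivAt_integral_zero hβ t).const_mul I).neg.cexp).congr_deriv ?_
    ring
  have h := is_const_of_deriv_eq_zero (fun t => (hconst t).differentiableAt)
    (fun t => (hconst t).deriv) t 0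
  simp only [intervalIntegral.integral_same, mul_zero, neg_zero, Complex.exp_zero, mul_one] at h
  rw [← h, mul_assoc, ← Complex.exp_add, neg_add_cancel, Complex.exp_zero, mul_one]

lemma exists_isAngularLift {γ β : ℝ → ℂ} (hβ : Continuous β)
    (hper : Function.Periodic β (2 * π)) (hpos : ∀ t, 0 < (β t).re)
    (hwind : ∫ t in (0 : ℝ)..2 * π, β t = 2 * π) (hγ : ∀ t, HasDerivAt γ (I * β t * γ t) t)
    (h₀ : γ 0 ≠ 0) : ∃ Ψ, IsAngularLift γ Ψ := by
  set J : ℝ → ℂ := fun t => ∫ u in (0 : ℝ)..t, β u with hJ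
  have hJre : ∀ t, HasDerivAt (fun t => (J t).re) (β t).re t := fun t =>
    reCLM.hasFDerivAt.comp_hasDerivAt t (hasDerivAt_integral_zero hβ t)
  have hγJ : ∀ t, γ t = γ 0 * cexp (I * J t) := eq_mul_exp_integral hβ hγ
  refine ⟨fun t => (γ 0).arg + (J t).re, fun t => ?_, fun t => ?_, ?_, ?_, fun t => ?_⟩
  · rw [hγJ]
    exact mul_ne_zero h₀ (Complex.exp_ne_zero _)
  · have hsplit : I * J t = -(J t).im + (J t).re * I := by
      conv_lhs => rw [← re_add_im (J t)]
      linear_combination ((J t).im : ℂ) * I_sq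
    rw [hγJ, norm_mul, norm_exp, hsplit]
    conv_lhs => rw [← norm_mul_exp_arg_mul_I (γ 0)]
    simp only [add_re, neg_re, ofReal_re, mul_re, I_re, ofReal_im, I_im, mul_zero, zero_mul,
      sub_zero, add_zero, ofReal_mul, ofReal_exp, ofReal_add, ofReal_neg, add_mul, Complex.exp_add]
    ring
  · refine strictMono_of_deriv_pos fun t => ?_
    rw [((hJre t).const_add _).deriv]
    exact hpos t
  · exact continuous_const.add (continuous_iff_continuousAt.2 fun t => (hJre t).continuousAt)
  · have hJper : J (t + 2 * π) = J t + (2 * π : ℝ) := by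
      simp only [hJ]
      rw [← intervalIntegral.integral_add_adjacent_intervals (hβ.intervalIntegrable 0 t)
        (hβ.intervalIntegrable t _), hper.intervalIntegral_add_eq t 0, zero_add, hwind]
      push_cast
      rfl
    simp only [hJper, add_re, ofReal_re, add_assoc]

lemma circleMap_zero_mem_ball {ρ R : ℝ} (hρ : 0 < ρ) (hρR : ρ < R) (t : ℝ) :
    circleMap 0 ρ t ∈ ball (0 : ℂ) R := by
  simp only [mem_ball_zero_iff, norm_circleMap_zero, abs_of_pos hρ, hρR]

lemma circleAverage_eq_apply_zero {ρ : ℝ} (hρ : 0 < ρ) {h : ℂ → ℂ}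
    (hh : DifferentiableOn ℂ h (closedBall 0 ρ)) : circleAverage h 0 ρ = h 0 := by
  refine DiffContOnCl.circleAverage (DifferentiableOn.diffContOnCl ?_)
  rwa [abs_of_pos hρ, closure_ball _ hρ.ne']

lemma exists_isAngularLift_circleMap {ρ R : ℝ} (hρ : 0 < ρ) (hρR : ρ < R) {q B : ℂ → ℂ}
    (hq : DifferentiableOn ℂ q (ball 0 R)) (hB : DifferentiableOn ℂ B (ball 0 R)) (hB0 : B 0 = 1)
    (hBre : ∀ z ∈ ball 0 R, 0 < (B z).re) (hqB : ∀ z ∈ ball 0 R, z * deriv q z = B z * q z)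
    (hq0 : q ρ ≠ 0) : ∃ Ψ, IsAngularLift (fun t => q (circleMap 0 ρ t)) Ψ := by
  have hmem := circleMap_zero_mem_ball hρ hρR
  refine exists_isAngularLift (β := fun t => B (circleMap 0 ρ t))
    (hB.continuousOn.comp_continuous (continuous_circleMap 0 ρ) hmem)
    ((periodic_circleMap 0 ρ).comp B) (fun t => hBre _ (hmem t)) ?_ (fun t => ?_)
    (by simpa [circleMap_zero] using hq0)
  · have hmean := circleAverage_eq_apply_zero hρ (hB.mono (closedBall_subset_ball hρR))
    rwa [Real.circleAverage_def, hB0, inv_smul_eq_iff₀ Real.two_pi_pos.ne', real_smul, mul_one,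
      ofReal_mul, ofReal_ofNat] at hmean
  · have hqd := (hq.differentiableAt (isOpen_ball.mem_nhds (hmem t))).hasDerivAt
    refine (hqd.comp t (hasDerivAt_circleMap 0 ρ t)).congr_deriv ?_
    rw [mul_assoc I, ← hqB _ (hmem t)]
    ring

end ExistsLift

section CircleAverage

lemma mul_conj_of_mem_sphere {ζ : ℂ} (hζ : ζ ∈ sphere (0 : ℂ) 1) : ζ * conj ζ = 1 := by
  rw [mul_conj', mem_sphere_zero_iff_norm.1 hζ, ofReal_one, one_pow]

lemma conj_mem_sphere {ζ : ℂ} (hζ : ζ ∈ sphere (0 : ℂ) 1) : conj ζ ∈ sphere (0 : ℂ) 1 := by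
  rwa [mem_sphere_zero_iff_norm, norm_conj, ← mem_sphere_zero_iff_norm]

lemma exists_circleMap_eq (P : ℝ) {z : ℂ} (hz : z ∈ sphere (0 : ℂ) 1) :
    ∃ q ∈ Ico P (P + 2 * π), circleMap 0 1 q = z := by
  obtain ⟨t, rfl⟩ : z ∈ range (circleMap 0 1) := by rwa [range_circleMap, abs_one]
  obtain ⟨q, hq, h⟩ := (periodic_circleMap 0 1).exists_mem_Ico Real.two_pi_pos t P
  exact ⟨q, hq, h.symm⟩

lemma continuousOn_conj_comp {h : ℂ → ℂ} {s : Set ℂ} (hh : ContinuousOn h s) :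
    ContinuousOn (fun z => conj (h z)) s :=
  continuous_conj.comp_continuousOn hh

lemma circleMap_sub_circleMap (t q : ℝ) :
    circleMap 0 1 t - circleMap 0 1 q =
      2 * I * (Real.sin ((t - q) / 2) : ℂ) * circleMap 0 1 ((t + q) / 2) := by
  have ht : circleMap 0 1 t = cexp (((t - q) / 2 : ℝ) * I) * circleMap 0 1 ((t + q) / 2) := by
    simp only [circleMap_zero, ofReal_one, one_mul, ← Complex.exp_add]
    congr 1; push_cast; ring
  have hq : circleMap 0 1 q = cexp (-((t - q) / 2 : ℝ) * I) * circleMap 0 1 ((t + q) / 2) := by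
    simp only [circleMap_zero, ofReal_one, one_mul, ← Complex.exp_add]
    congr 1; push_cast; ring
  rw [ht, hq, ofReal_sin, Complex.sin]
  linear_combination -(cexp (-((t - q) / 2 : ℝ) * I) - cexp (((t - q) / 2 : ℝ) * I)) *
    circleMap 0 1 ((t + q) / 2) * I_sq

lemma circleMap_sub_mul_sin (t P q : ℝ) :
    (circleMap 0 1 t - circleMap 0 1 q) * (Real.sin ((t - P) / 2) : ℂ) =
      cexp (((q - P) / 2 : ℝ) * I) *
        ((circleMap 0 1 t - circleMap 0 1 P) * (Real.sin ((t - q) / 2) : ℂ)) := by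
  have hmid : circleMap 0 1 ((t + q) / 2) =
      cexp (((q - P) / 2 : ℝ) * I) * circleMap 0 1 ((t + P) / 2) := by
    simp only [circleMap_zero, ofReal_one, one_mul, ← Complex.exp_add]
    congr 1; push_cast; ring
  rw [circleMap_sub_circleMap, circleMap_sub_circleMap, hmid]
  ring

lemma integral_pos_of_pos_off_countable {f : ℝ → ℝ} {a b : ℝ} (hab : a < b)
    (hf : IntervalIntegrable f volume a b) {C : Set ℝ} (hC : C.Countable)
    (h : ∀ t ∈ Ioo a b, t ∉ C → 0 < f t) : 0 < ∫ t in a..b, f t := by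
  classical
  have hae : ∀ᵐ t, f t = C.piecewise 1 f t :=
    (hC.ae_notMem volume).mono fun t ht => (C.piecewise_eq_of_notMem _ _ ht).symm
  rw [intervalIntegral.integral_congr_ae (hae.mono fun t ht _ => ht)]
  refine intervalIntegral.intervalIntegral_pos_of_pos_on
    (hf.congr_ae (ae_restrict_of_ae hae)) (fun t ht => ?_) hab
  by_cases htC : t ∈ C
  · simp [htC]
  · simpa [htC] using h t ht htC

lemma circleMap_zero_one_mem (t : ℝ) : circleMap 0 1 t ∈ sphere (0 : ℂ) 1 :=
  circleMap_mem_sphere 0 zero_le_one t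

lemma circleIntegrable_of_continuousOn {E : Type*} [NormedAddCommGroup E] {f : ℂ → E}
    (hf : ContinuousOn f (sphere 0 1)) : CircleIntegrable f 0 1 :=
  hf.circleIntegrable zero_le_one

lemma circleAverage_pos_of_pos_off_countable {f : ℂ → ℝ} (hf : ContinuousOn f (sphere 0 1)) (P : ℝ)
    {C : Set ℝ} (hC : C.Countable)
    (h : ∀ t ∈ Ioo P (P + 2 * π), t ∉ C → 0 < f (circleMap 0 1 t)) :
    0 < circleAverage f 0 1 := by
  have hper : Function.Periodic (fun t => f (circleMap 0 1 t)) (2 * π) :=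
    (periodic_circleMap 0 1).comp f
  have hcont : Continuous fun t => f (circleMap 0 1 t) :=
    hf.comp_continuous (continuous_circleMap 0 1) circleMap_zero_one_mem
  rw [Real.circleAverage_def, ← zero_add (2 * π), hper.intervalIntegral_add_eq 0 P, zero_add]
  exact smul_pos (by positivity) (integral_pos_of_pos_off_countable
    (by linarith [Real.two_pi_pos]) (hcont.intervalIntegrable _ _) hC h)

lemma circleAverage_const_mul (c : ℂ) (f : ℂ → ℂ) (z : ℂ) (r : ℝ) :
    circleAverage (fun ζ => c * f ζ) z r = c * circleAverage f z r :=
  Real.circleAverage_fun_smul (a := c)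

lemma circleAverage_im_mul_im_eq_zero {D p : ℂ → ℂ} (hD : ContinuousOn D (sphere 0 1))
    (hp : ContinuousOn p (sphere 0 1)) (h : circleAverage (fun ζ => D ζ * p ζ) 0 1 = 0)
    (h' : circleAverage (fun ζ => D ζ * conj (p ζ)) 0 1 = 0) (c w : ℂ) :
    circleAverage (fun ζ => (c * D ζ).im * (w * p ζ).im) 0 1 = 0 := by
  have hint : CircleIntegrable (fun ζ => c * w / 2 * (D ζ * p ζ)) 0 1 :=
    circleIntegrable_of_continuousOn (continuousOn_const.mul (hD.mul hp))
  have hint' : CircleIntegrable (fun ζ => c * conj w / 2 * (D ζ * conj (p ζ))) 0 1 :=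
    circleIntegrable_of_continuousOn (continuousOn_const.mul (hD.mul (continuousOn_conj_comp hp)))
  have hre : ∀ ζ, (c * D ζ).im * (w * p ζ).im =
      reCLM (c * conj w / 2 * (D ζ * conj (p ζ)) - c * w / 2 * (D ζ * p ζ)) := fun ζ => by
    simp only [reCLM_apply, mul_re, mul_im, sub_re, conj_re, conj_im, div_ofNat_re, div_ofNat_im]
    ring
  simp only [hre]
  refine (reCLM.circleAverage_comp_comm (hint'.sub hint)).trans ?_
  rw [Real.circleAverage_sub hint' hint, circleAverage_const_mul, circleAverage_const_mul, h, h',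
    mul_zero, mul_zero, sub_zero, map_zero]

lemma sin_mul_im_mul_dslope_circleMap (φ : ℂ → ℂ) (d : ℂ) (P q t : ℝ) :
    Real.sin ((t - P) / 2) * (d * cexp (-(((q - P) / 2 : ℝ) * I)) *
        (dslope φ (circleMap 0 1 P) (circleMap 0 1 t) * (circleMap 0 1 t - circleMap 0 1 q))).im =
      (d * (φ (circleMap 0 1 t) - φ (circleMap 0 1 P))).im * Real.sin ((t - q) / 2) := by
  have hphase : cexp (-(((q - P) / 2 : ℝ) * I)) * cexp (((q - P) / 2 : ℝ) * I) = 1 := by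
    rw [← Complex.exp_add, neg_add_cancel, Complex.exp_zero]
  have hdslope := sub_smul_dslope φ (circleMap 0 1 P) (circleMap 0 1 t)
  rw [smul_eq_mul] at hdslope
  rw [← im_ofReal_mul, mul_comm _ (Real.sin _), ← im_ofReal_mul, ← hdslope]
  congr 1
  linear_combination d * cexp (-(((q - P) / 2 : ℝ) * I)) *
    dslope φ (circleMap 0 1 P) (circleMap 0 1 t) * circleMap_sub_mul_sin t P q +
    d * dslope φ (circleMap 0 1 P) (circleMap 0 1 t) *
      ((circleMap 0 1 t - circleMap 0 1 P) * (Real.sin ((t - q) / 2) : ℂ)) * hphase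

/- If the mean vanished, the mean of `Im (c D) Im (w p)`, with `D ζ = dslope φ η ζ * (ζ - κ)`, would
vanish for all constants `c` and `w`. The separating line for the curve `φ` and the value of `p` at
`κ` provide constants making this product positive: the factors `ζ - η` and `ζ - κ` have the phase
of a half-angle up to the signs of the two sines. -/
lemma circleAverage_dslope_mul_conj_ne_zero {R : ℝ} (hR : 1 < R) {φ p : ℂ → ℂ} {T : ℝ → ℂ}
    {Θ Ψ : ℝ → ℝ} (hφ : DifferentiableOn ℂ φ (ball 0 R)) (hp : DifferentiableOn ℂ p (ball 0 R))
    (hp0 : p 0 = 0) (hT : IsAngularLift T Θ)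
    (hφT : ∀ t, HasDerivAt (fun t => φ (circleMap 0 1 t)) (T t) t)
    (hpΨ : IsAngularLift (fun t => p (circleMap 0 1 t)) Ψ) {η κ : ℂ} (hη : η ∈ sphere (0 : ℂ) 1)
    (hκ : κ ∈ sphere (0 : ℂ) 1) :
    circleAverage (fun ζ => dslope φ η ζ * (ζ - κ) * conj (p ζ)) 0 1 ≠ 0 := by
  intro hzero
  obtain ⟨P, -, rfl⟩ := exists_circleMap_eq 0 hη
  obtain ⟨q, hq, rfl⟩ := exists_circleMap_eq P hκ
  have hsphere : sphere (0 : ℂ) 1 ⊆ ball 0 R := sphere_subset_ball hR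
  have hD : DifferentiableOn ℂ
      (fun ζ => dslope φ (circleMap 0 1 P) ζ * (ζ - circleMap 0 1 q)) (ball 0 R) :=
    ((differentiableOn_dslope (isOpen_ball.mem_nhds (hsphere hη))).2 hφ).mul (by fun_prop)
  have hDc := hD.continuousOn.mono hsphere
  have hpc := hp.continuousOn.mono hsphere
  obtain ⟨d, s, hpos⟩ := exists_im_mul_sin_half_mul_im_pos hT hφT
    ((periodic_circleMap 0 1).comp φ) hpΨ ((periodic_circleMap 0 1).comp p) hq
  have hmean := circleAverage_im_mul_im_eq_zero hDc hpc
    ((circleAverage_eq_apply_zero one_pos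
      ((hD.mul hp).mono (closedBall_subset_ball hR))).trans (by simp [hp0])) hzero
    (d * cexp (-(((q - P) / 2 : ℝ) * I))) (conj (p (circleMap 0 1 q)))
  refine (circleAverage_pos_of_pos_off_countable ?_ P (C := {s, q}) (by simp) ?_).ne' hmean
  · exact (continuous_im.comp_continuousOn (continuousOn_const.mul hDc)).mul
      (continuous_im.comp_continuousOn (continuousOn_const.mul hpc))
  · intro t ht htC
    have hsin : 0 < Real.sin ((t - P) / 2) :=
      Real.sin_pos_of_pos_of_lt_pi (by linarith [ht.1]) (by linarith [ht.2])
    refine pos_of_mul_pos_right ?_ hsin.le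
    rw [← mul_assoc, sin_mul_im_mul_dslope_circleMap, mul_assoc]
    exact hpos t ht (fun h => htC (by simp [h])) fun h => htC (by simp [h])

end CircleAverage

section Szego

lemma continuousOn_circleAverage {K : ℂ → ℂ → ℂ} {A : Set ℂ}
    (hK : ContinuousOn (Function.uncurry K) (A ×ˢ sphere 0 1)) :
    ContinuousOn (fun η => circleAverage (K η) 0 1) A := by
  rw [continuousOn_iff_continuous_domRestrict]
  refine continuous_const.smul
    (intervalIntegral.continuous_parametric_intervalIntegral_of_continuous' ?_ 0 (2 * π))
  exact hK.comp_continuous ((continuous_subtype_val.comp continuous_fst).prodMk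
    ((continuous_circleMap 0 1).comp continuous_snd))
    fun x => ⟨x.1.2, circleMap_zero_one_mem x.2⟩

lemma circleAverage_circleAverage_comm {K : ℂ → ℂ → ℂ}
    (hK : ContinuousOn (Function.uncurry K) (sphere 0 1 ×ˢ sphere 0 1)) :
    circleAverage (fun η => circleAverage (fun ζ => K η ζ) 0 1) 0 1 =
      circleAverage (fun ζ => circleAverage (fun η => K η ζ) 0 1) 0 1 := by
  have hcont : Continuous fun x : ℝ × ℝ => K (circleMap 0 1 x.1) (circleMap 0 1 x.2) :=
    hK.comp_continuous (((continuous_circleMap 0 1).comp continuous_fst).prodMk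
      ((continuous_circleMap 0 1).comp continuous_snd))
      fun x => ⟨circleMap_zero_one_mem x.1, circleMap_zero_one_mem x.2⟩
  simp only [Real.circleAverage_def, intervalIntegral.integral_smul]
  rw [intervalIntegral_intervalIntegral_swap]
  exact (hcont.continuousOn.integrableOn_compact (isCompact_uIcc.prod isCompact_uIcc)).mono_set
    (prod_mono uIoc_subset_uIcc uIoc_subset_uIcc)

lemma circleAverage_conj {f : ℂ → ℂ} (hf : ContinuousOn f (sphere 0 1)) :
    circleAverage (fun ζ => conj (f ζ)) 0 1 = conj (circleAverage f 0 1) :=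
  (conjCLE : ℂ →L[ℝ] ℂ).circleAverage_comp_comm (circleIntegrable_of_continuousOn hf)

/-- The Szegő projection of a function on the unit circle, as a function on the unit disk: the
Cauchy integral `(2πi)⁻¹ ∮ h(ζ) / (ζ - P) dζ`, written as an average over the circle. -/
def szego (h : ℂ → ℂ) (P : ℂ) : ℂ :=
  circleAverage (fun ζ => ζ / (ζ - P) * h ζ) 0 1

lemma sub_ne_zero_of_mem_sphere {P ζ : ℂ} (hP : ‖P‖ < 1) (hζ : ζ ∈ sphere (0 : ℂ) 1) :
    ζ - P ≠ 0 := by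
  rintro h
  rw [mem_sphere_zero_iff_norm, sub_eq_zero.1 h] at hζ
  exact hP.ne hζ

lemma one_sub_mul_ne_zero {a z : ℂ} (ha : ‖a‖ < 1) (hz : z ∈ closedBall (0 : ℂ) 1) :
    1 - a * z ≠ 0 := by
  intro h
  have hle : ‖a * z‖ ≤ ‖a‖ * 1 := by
    rw [norm_mul]
    exact mul_le_mul_of_nonneg_left (mem_closedBall_zero_iff.1 hz) (norm_nonneg a)
  rw [← sub_eq_zero.1 h, norm_one, mul_one] at hle
  exact hle.not_gt ha

lemma div_sub_eq_inv_one_sub {ζ : ℂ} (hζ : ζ ∈ sphere (0 : ℂ) 1) (a : ℂ) :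
    ζ / (ζ - a) = (1 - a * conj ζ)⁻¹ := by
  have hζ0 : ζ ≠ 0 := ne_zero_of_mem_unit_sphere ⟨ζ, hζ⟩
  rw [← Complex.inv_eq_conj (mem_sphere_zero_iff_norm.1 hζ), ← div_eq_mul_inv, one_sub_div hζ0,
    inv_div]

lemma szego_eq_of_differentiableOn {h : ℂ → ℂ} (hh : DifferentiableOn ℂ h (closedBall 0 1))
    {P : ℂ} (hP : ‖P‖ < 1) : szego h P = h P := by
  have hcl : DiffContOnCl ℂ h (ball 0 |1|) :=
    DifferentiableOn.diffContOnCl (by rwa [abs_one, closure_ball _ one_ne_zero])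
  rw [← hcl.circleAverage_smul_div (by rwa [abs_one, mem_ball_zero_iff])]
  simp only [szego, sub_zero, smul_eq_mul]

lemma differentiableOn_inv_one_sub_mul {a : ℂ} (ha : ‖a‖ < 1) :
    DifferentiableOn ℂ (fun z => (1 - a * z)⁻¹) (closedBall 0 1) :=
  DifferentiableOn.fun_inv (by fun_prop) fun _ hz => one_sub_mul_ne_zero ha hz

lemma szego_conj {p : ℂ → ℂ} (hp : DifferentiableOn ℂ p (closedBall 0 1))
    {P : ℂ} (hP : ‖P‖ < 1) : szego (fun ζ => conj (p ζ)) P = conj (p 0) := by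
  have hdiff : DifferentiableOn ℂ (fun ζ => (1 - conj P * ζ)⁻¹ * p ζ) (closedBall 0 1) :=
    (differentiableOn_inv_one_sub_mul (by rwa [norm_conj])).mul hp
  calc szego (fun ζ => conj (p ζ)) P
      = circleAverage (fun ζ => conj ((1 - conj P * ζ)⁻¹ * p ζ)) 0 1 := by
        refine Real.circleAverage_congr_sphere fun ζ hζ => ?_
        rw [abs_one] at hζ
        simp only [div_sub_eq_inv_one_sub hζ, map_mul, map_inv₀, map_sub, map_one, conj_conj]
    _ = conj (p 0) := by
        rw [circleAverage_conj (hdiff.continuousOn.mono sphere_subset_closedBall),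
          circleAverage_eq_apply_zero one_pos hdiff]
        simp

lemma norm_ofReal_mul_lt_one {s : ℝ} (hs : |s| < 1) {η : ℂ} (hη : η ∈ closedBall (0 : ℂ) 1) :
    ‖(s : ℂ) * η‖ < 1 := by
  rw [norm_mul, Complex.norm_real, Real.norm_eq_abs]
  exact (mul_le_of_le_one_right (abs_nonneg s) (mem_closedBall_zero_iff.1 hη)).trans_lt hs

lemma continuousOn_szego_kernel {h : ℂ → ℂ} (hh : ContinuousOn h (sphere 0 1)) {s : ℝ}
    (hs : |s| < 1) :
    ContinuousOn (Function.uncurry fun η ζ : ℂ => ζ / (ζ - s * η) * h ζ)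
      (sphere 0 1 ×ˢ sphere 0 1) := by
  refine ContinuousOn.mul (continuousOn_snd.div
    (continuousOn_snd.sub (continuousOn_fst.const_smul (s : ℂ))) fun x hx => ?_)
    (hh.comp continuousOn_snd fun x hx => hx.2)
  exact sub_ne_zero_of_mem_sphere
    (norm_ofReal_mul_lt_one hs (sphere_subset_closedBall hx.1)) hx.2

lemma continuousOn_szego {h : ℂ → ℂ} (hh : ContinuousOn h (sphere 0 1)) {s : ℝ} (hs : |s| < 1) :
    ContinuousOn (fun η => szego h (s * η)) (sphere 0 1) :=
  continuousOn_circleAverage (continuousOn_szego_kernel hh hs)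

lemma circleAverage_szego_mul {h G : ℂ → ℂ} (hh : ContinuousOn h (sphere 0 1))
    (hG : ContinuousOn G (sphere 0 1)) {s : ℝ} (hs : |s| < 1) :
    circleAverage (fun η => szego h (s * η) * G η) 0 1 =
      circleAverage (fun ζ => h ζ * circleAverage (fun η => ζ / (ζ - s * η) * G η) 0 1) 0 1 := by
  have hK : ContinuousOn (Function.uncurry fun η ζ : ℂ => G η * (ζ / (ζ - s * η) * h ζ))
      (sphere 0 1 ×ˢ sphere 0 1) :=
    (hG.comp continuousOn_fst fun x hx => hx.1).mul (continuousOn_szego_kernel hh hs)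
  calc circleAverage (fun η => szego h (s * η) * G η) 0 1
      = circleAverage (fun η => circleAverage (fun ζ =>
          G η * (ζ / (ζ - s * η) * h ζ)) 0 1) 0 1 := by
        congr 1 with η
        rw [circleAverage_const_mul, mul_comm]
        rfl
    _ = _ := by
        rw [circleAverage_circleAverage_comm hK]
        congr 1 with ζ
        rw [← circleAverage_const_mul]
        congr 1 with η
        ring

lemma circleAverage_szego_mul_of_differentiableOn {h B : ℂ → ℂ}
    (hh : ContinuousOn h (sphere 0 1)) (hB : DifferentiableOn ℂ B (closedBall 0 1)) {s : ℝ}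
    (hs : |s| < 1) :
    circleAverage (fun η => szego h (s * η) * B η) 0 1 = circleAverage h 0 1 * B 0 := by
  rw [circleAverage_szego_mul hh (hB.continuousOn.mono sphere_subset_closedBall) hs, mul_comm,
    ← circleAverage_const_mul]
  refine Real.circleAverage_congr_sphere fun ζ hζ => ?_
  rw [abs_one] at hζ
  have hζ0 : ζ ≠ 0 := ne_zero_of_mem_unit_sphere ⟨ζ, hζ⟩
  have hdiff : DifferentiableOn ℂ (fun η => ζ / (ζ - s * η) * B η) (closedBall 0 1) :=
    ((differentiableOn_const ζ).div ((differentiableOn_const ζ).sub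
      (differentiableOn_id.const_mul (s : ℂ)))
      fun η hη => sub_ne_zero_of_mem_sphere (norm_ofReal_mul_lt_one hs hη) hζ).mul hB
  simp only [circleAverage_eq_apply_zero one_pos hdiff, mul_zero, sub_zero, div_self hζ0, one_mul,
    mul_comm (B 0)]

lemma circleAverage_szego_mul_conj {h B : ℂ → ℂ} (hh : ContinuousOn h (sphere 0 1))
    (hB : DifferentiableOn ℂ B (closedBall 0 1)) {s : ℝ} (hs : |s| < 1) :
    circleAverage (fun η => szego h (s * η) * conj (B η)) 0 1 =
      circleAverage (fun ζ => h ζ * conj (B (s * ζ))) 0 1 := by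
  have hBc := hB.continuousOn.mono (sphere_subset_closedBall (x := 0) (ε := 1))
  rw [circleAverage_szego_mul hh (continuousOn_conj_comp hBc) hs]
  refine Real.circleAverage_congr_sphere fun ζ hζ => ?_
  rw [abs_one] at hζ
  have hsζ := norm_ofReal_mul_lt_one hs (sphere_subset_closedBall hζ)
  have hcont : ContinuousOn (fun η => η / (η - s * ζ) * B η) (sphere 0 1) :=
    (continuousOn_id.div (continuousOn_id.sub continuousOn_const)
      fun η hη => sub_ne_zero_of_mem_sphere hsζ hη).mul hBc
  have hinner : circleAverage (fun η => ζ / (ζ - s * η) * conj (B η)) 0 1 =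
      conj (szego B (s * ζ)) := by
    rw [szego, ← circleAverage_conj hcont]
    refine Real.circleAverage_congr_sphere fun η hη => ?_
    rw [abs_one] at hη
    simp only [div_sub_eq_inv_one_sub hζ, div_sub_eq_inv_one_sub hη, map_mul, map_inv₀, map_sub,
      map_one, conj_conj, conj_ofReal]
    ring
  simp only [hinner, szego_eq_of_differentiableOn hB hsζ]

lemma circleAverage_mul_conj_shift {A p : ℂ → ℂ} (hA : DifferentiableOn ℂ A (closedBall 0 1))
    (hp : DifferentiableOn ℂ p (closedBall 0 1)) {s : ℝ} (hs : |s| < 1) :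
    circleAverage (fun ζ => A (s * ζ) * conj (p ζ)) 0 1 =
      circleAverage (fun ζ => A ζ * conj (p (s * ζ))) 0 1 := by
  rw [← circleAverage_szego_mul_conj (hA.continuousOn.mono sphere_subset_closedBall) hp hs]
  refine Real.circleAverage_congr_sphere fun ζ hζ => ?_
  rw [abs_one] at hζ
  simp only [szego_eq_of_differentiableOn hA
    (norm_ofReal_mul_lt_one hs (sphere_subset_closedBall hζ))]

end Szego

section SzegoDslope

lemma div_ofReal_mem_ball {s R : ℝ} (hs : 0 < s) {z : ℂ} (hz : z ∈ ball 0 (s * R)) :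
    z / s ∈ ball (0 : ℂ) R := by
  rw [mem_ball_zero_iff] at hz ⊢
  rwa [norm_div, Complex.norm_real, Real.norm_of_nonneg hs.le, div_lt_iff₀' hs]

lemma dslope_comp_const_mul {s : ℂ} (hs : s ≠ 0) (φ : ℂ → ℂ) (η ζ : ℂ) :
    dslope (fun z => φ (s * z)) η ζ = s * dslope φ (s * η) (s * ζ) := by
  rcases eq_or_ne ζ η with rfl | hne
  · simp only [dslope_same, deriv_comp_mul_left, smul_eq_mul]
  · rw [dslope_of_ne _ hne, dslope_of_ne _ (by simpa [hs] using hne), slope_def_field,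
      slope_def_field, ← mul_sub, ← mul_div_assoc, mul_div_mul_left _ _ hs]

lemma continuousOn_mul_sub_div_sub {P : ℂ} (hP : ‖P‖ < 1) (u : ℂ) :
    ContinuousOn (fun ζ => (u * ζ - P) / (ζ - P)) (sphere 0 1) :=
  ContinuousOn.div (by fun_prop) (by fun_prop) fun _ => sub_ne_zero_of_mem_sphere hP

lemma circleAverage_sub_one_sub_mul_szego {h : ℂ → ℂ} (hh : ContinuousOn h (sphere 0 1)) {P : ℂ}
    (hP : ‖P‖ < 1) (u : ℂ) :
    circleAverage h 0 1 - (1 - u) * szego h P =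
      circleAverage (fun ζ => (u * ζ - P) / (ζ - P) * h ζ) 0 1 := by
  have hker : ContinuousOn (fun ζ => ζ / (ζ - P)) (sphere 0 1) :=
    continuousOn_id.div (by fun_prop) fun _ => sub_ne_zero_of_mem_sphere hP
  rw [szego, ← circleAverage_const_mul, ← Real.circleAverage_fun_sub
    (circleIntegrable_of_continuousOn hh)
    (circleIntegrable_of_continuousOn (continuousOn_const.fun_mul (hker.fun_mul hh)))]
  refine Real.circleAverage_congr_sphere fun ζ hζ => ?_
  rw [abs_one] at hζ
  field_simp [sub_ne_zero_of_mem_sphere hP hζ]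
  ring

lemma circleAverage_sub_one_sub_mul_szego_conj {p : ℂ → ℂ}
    (hp : DifferentiableOn ℂ p (closedBall 0 1)) (hp0 : p 0 = 0) {P : ℂ} (hP : ‖P‖ < 1) (u : ℂ) :
    circleAverage (fun ζ => (u * ζ - P) / (ζ - P) * conj (p ζ)) 0 1 = 0 := by
  have hpc := hp.continuousOn.mono (sphere_subset_closedBall (x := (0 : ℂ)))
  rw [← circleAverage_sub_one_sub_mul_szego (continuousOn_conj_comp hpc) hP u, szego_conj hp hP,
    circleAverage_conj hpc, circleAverage_eq_apply_zero one_pos hp, hp0, map_zero, mul_zero,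
    sub_zero]

lemma circleAverage_sub_one_sub_mul_szego_eq_dslope {φ p : ℂ → ℂ}
    (hφ : ContinuousOn φ (sphere 0 1)) (hp : DifferentiableOn ℂ p (closedBall 0 1))
    (hp0 : p 0 = 0) {P : ℂ} (hP : ‖P‖ < 1) (u : ℂ) :
    circleAverage (fun ζ => φ ζ * conj (p ζ)) 0 1 -
        (1 - u) * szego (fun ζ => φ ζ * conj (p ζ)) P =
      circleAverage (fun ζ => dslope φ P ζ * (u * ζ - P) * conj (p ζ)) 0 1 := by
  have hpc := continuousOn_conj_comp (hp.continuousOn.mono (sphere_subset_closedBall (x := 0)))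
  have hKp := (continuousOn_mul_sub_div_sub hP u).fun_mul hpc
  calc _ = circleAverage (fun ζ => φ ζ * ((u * ζ - P) / (ζ - P) * conj (p ζ))) 0 1 -
        φ P * circleAverage (fun ζ => (u * ζ - P) / (ζ - P) * conj (p ζ)) 0 1 := by
        rw [circleAverage_sub_one_sub_mul_szego (hφ.fun_mul hpc) hP,
          circleAverage_sub_one_sub_mul_szego_conj hp hp0 hP, mul_zero, sub_zero]
        simp only [mul_left_comm]
    _ = _ := by
        rw [← circleAverage_const_mul, ← Real.circleAverage_fun_sub
          (circleIntegrable_of_continuousOn (hφ.fun_mul hKp))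
          (circleIntegrable_of_continuousOn (continuousOn_const.fun_mul hKp))]
        refine Real.circleAverage_congr_sphere fun ζ hζ => ?_
        rw [abs_one] at hζ
        have hne := sub_ne_zero_of_mem_sphere hP hζ
        simp only [dslope_of_ne φ (sub_ne_zero.1 hne), slope_def_field]
        ring

lemma circleAverage_sub_one_sub_mul_szego_eq_dilate {R s : ℝ} (hs : 0 < s) (hs1 : s < 1)
    (hRs : 1 < s * R) {φ p : ℂ → ℂ} (hφ : DifferentiableOn ℂ φ (ball 0 R))
    (hp : DifferentiableOn ℂ p (ball 0 R)) (hp0 : p 0 = 0) {η : ℂ} (hη : η ∈ sphere (0 : ℂ) 1)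
    {u : ℂ} (hu : u ∈ sphere (0 : ℂ) 1) :
    circleAverage (fun ζ => φ ζ * conj (p ζ)) 0 1 -
        (1 - u) * szego (fun ζ => φ ζ * conj (p ζ)) (s * η) =
      u * circleAverage (fun ζ =>
        dslope (fun z => φ (s * z)) η ζ * (ζ - η * conj u) * conj (p (ζ / s))) 0 1 := by
  have hs0 : (s : ℂ) ≠ 0 := by exact_mod_cast hs.ne'
  have hR : 1 < R := by nlinarith
  have habs : |s| < 1 := by rwa [abs_of_pos hs]
  have hball := closedBall_subset_ball (x := (0 : ℂ)) hR
  have hP : ‖(s : ℂ) * η‖ < 1 := norm_ofReal_mul_lt_one habs (sphere_subset_closedBall hη)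
  have hu1 : u * conj u = 1 := mul_conj_of_mem_sphere hu
  have hA : DifferentiableOn ℂ (fun ζ => dslope φ (s * η) ζ * (u * ζ - s * η)) (closedBall 0 1) :=
    (((differentiableOn_dslope (isOpen_ball.mem_nhds
      (hball (mem_closedBall_zero_iff.2 hP.le)))).2 hφ).mono hball).mul (by fun_prop)
  have hps : DifferentiableOn ℂ (fun ζ => p (ζ / s)) (closedBall 0 1) :=
    hp.comp (by fun_prop) fun _ hζ => div_ofReal_mem_ball hs (closedBall_subset_ball hRs hζ)
  have hshift := circleAverage_mul_conj_shift hA hps habs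
  simp only [mul_div_cancel_left₀ _ hs0] at hshift
  rw [circleAverage_sub_one_sub_mul_szego_eq_dslope
    (hφ.continuousOn.mono (sphere_subset_closedBall.trans hball)) (hp.mono hball) hp0 hP, ← hshift,
    ← circleAverage_const_mul]
  congr 1 with ζ
  rw [dslope_comp_const_mul hs0]
  linear_combination (s : ℂ) * dslope φ (s * η) (s * ζ) * η * conj (p (ζ / s)) * hu1

end SzegoDslope

/-- `φ` is a locally univalent function on the disk `|z| < R` mapping the concentric circles onto
convex curves. -/
structure IsConvexOnBall (φ : ℂ → ℂ) (R : ℝ) : Prop where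
  differentiableOn : DifferentiableOn ℂ φ (ball 0 R)
  deriv_ne_zero : ∀ z ∈ ball 0 R, deriv φ z ≠ 0
  re_pos : ∀ z ∈ ball 0 R, 0 < (1 + z * deriv (deriv φ) z / deriv φ z).re

/-- `p` is starlike on the disk `|z| < R`, with logarithmic derivative `z p' / p = B`. Carrying `B`
as a function of its own avoids the removable singularity of the quotient at the origin. -/
structure IsStarlikeOnBall (p B : ℂ → ℂ) (R : ℝ) : Prop where
  differentiableOn : DifferentiableOn ℂ p (ball 0 R)
  apply_zero : p 0 = 0
  ne_zero : ∀ z ∈ ball 0 R, z ≠ 0 → p z ≠ 0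
  differentiableOn_logDeriv : DifferentiableOn ℂ B (ball 0 R)
  logDeriv_apply_zero : B 0 = 1
  logDeriv_re_pos : ∀ z ∈ ball 0 R, 0 < (B z).re
  mul_deriv : ∀ z ∈ ball 0 R, z * deriv p z = B z * p z

section Duality

variable {R s : ℝ} {φ p B : ℂ → ℂ}

lemma IsConvexOnBall.exists_isAngularLift (hφ : IsConvexOnBall φ R) (hs : 0 < s) (hsR : s < R) :
    ∃ Θ, IsAngularLift (fun t => I * circleMap 0 s t * deriv φ (circleMap 0 s t)) Θ := by
  have hd := hφ.differentiableOn.deriv isOpen_ball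
  have hsb : (s : ℂ) ∈ ball (0 : ℂ) R := by simpa [abs_of_pos hs] using hsR
  refine exists_isAngularLift_circleMap (q := fun z => I * z * deriv φ z)
    (B := fun z => 1 + z * deriv (deriv φ) z / deriv φ z) hs hsR
    (DifferentiableOn.mul (by fun_prop) hd)
    ((differentiableOn_const 1).add
      ((differentiableOn_id.mul (hd.deriv isOpen_ball)).div hd hφ.deriv_ne_zero))
    (by simp) hφ.re_pos (fun z hz => ?_) ?_
  · have hderiv : HasDerivAt (fun z => I * z * deriv φ z)
        (I * 1 * deriv φ z + I * z * deriv (deriv φ) z) z :=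
      ((hasDerivAt_id z).const_mul I).mul
        (hd.differentiableAt (isOpen_ball.mem_nhds hz)).hasDerivAt
    rw [hderiv.deriv]
    field_simp [hφ.deriv_ne_zero z hz]
  · exact mul_ne_zero (mul_ne_zero I_ne_zero (by exact_mod_cast hs.ne')) (hφ.deriv_ne_zero _ hsb)

lemma IsStarlikeOnBall.exists_isAngularLift (hp : IsStarlikeOnBall p B R) (hs : 0 < s)
    (hsR : s < R) : ∃ Ψ, IsAngularLift (fun t => p (circleMap 0 s t)) Ψ :=
  exists_isAngularLift_circleMap hs hsR hp.differentiableOn hp.differentiableOn_logDeriv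
    hp.logDeriv_apply_zero hp.logDeriv_re_pos hp.mul_deriv
    (hp.ne_zero s (by simpa [abs_of_pos hs] using hsR) (by exact_mod_cast hs.ne'))

lemma mul_circleMap_zero_one (s t : ℝ) : (s : ℂ) * circleMap 0 1 t = circleMap 0 s t := by
  simp [circleMap_zero]

lemma circleAverage_dslope_dilate_ne_zero (hφ : IsConvexOnBall φ R) (hp : IsStarlikeOnBall p B R)
    (hs : 0 < s) (hs1 : s < 1) (hRs : 1 < s * R) {η κ : ℂ} (hη : η ∈ sphere (0 : ℂ) 1)
    (hκ : κ ∈ sphere (0 : ℂ) 1) :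
    circleAverage (fun ζ =>
      dslope (fun z => φ (s * z)) η ζ * (ζ - κ) * conj (p (ζ / s))) 0 1 ≠ 0 := by
  have hR : 1 < R := by nlinarith
  obtain ⟨Θ, hΘ⟩ := hφ.exists_isAngularLift hs (hs1.trans hR)
  obtain ⟨Ψ, hΨ⟩ := hp.exists_isAngularLift (inv_pos.2 hs) (by rwa [inv_lt_iff_one_lt_mul₀' hs])
  refine circleAverage_dslope_mul_conj_ne_zero (p := fun z => p (z / s)) hRs
    (hφ.differentiableOn.comp (by fun_prop) fun z hz => ?_)
    (hp.differentiableOn.comp (by fun_prop) fun _ => div_ofReal_mem_ball hs)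
    (by rw [zero_div, hp.apply_zero]) hΘ (fun t => ?_) (Ψ := Ψ) ?_ hη hκ
  · rw [mem_ball_zero_iff] at hz ⊢
    rw [norm_mul, Complex.norm_real, Real.norm_of_nonneg hs.le]
    nlinarith [norm_nonneg z]
  · have hd := (hφ.differentiableOn.differentiableAt (isOpen_ball.mem_nhds
      (circleMap_zero_mem_ball hs (hs1.trans hR) t))).hasDerivAt
    have hcurve : (fun t => φ (s * circleMap 0 1 t)) = φ ∘ circleMap 0 s := by
      simp only [mul_circleMap_zero_one, Function.comp_def]
    exact hcurve ▸ (hd.comp t (hasDerivAt_circleMap 0 s t)).congr_deriv (by ring)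
  · simpa only [div_eq_inv_mul, ← ofReal_inv, mul_circleMap_zero_one] using hΨ

lemma circleAverage_ne_one_sub_mul_szego (hφ : IsConvexOnBall φ R) (hp : IsStarlikeOnBall p B R)
    (hs : 0 < s) (hs1 : s < 1) (hRs : 1 < s * R) {η u : ℂ} (hη : η ∈ sphere (0 : ℂ) 1)
    (hu : u ∈ sphere (0 : ℂ) 1) :
    circleAverage (fun ζ => φ ζ * conj (p ζ)) 0 1 ≠
      (1 - u) * szego (fun ζ => φ ζ * conj (p ζ)) (s * η) := by
  have hκ : η * conj u ∈ sphere (0 : ℂ) 1 := by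
    rw [mem_sphere_zero_iff_norm] at hη hu ⊢
    rw [norm_mul, norm_conj, hη, hu, mul_one]
  rw [← sub_ne_zero, circleAverage_sub_one_sub_mul_szego_eq_dilate hs hs1 hRs hφ.differentiableOn
    hp.differentiableOn hp.apply_zero hη hu]
  exact mul_ne_zero (ne_zero_of_mem_unit_sphere ⟨u, hu⟩)
    (circleAverage_dslope_dilate_ne_zero hφ hp hs hs1 hRs hη hκ)

lemma exists_one_lt_mul_of_one_lt (hR : 1 < R) : ∃ s : ℝ, 0 < s ∧ s < 1 ∧ 1 < s * R := by
  have hR0 : 0 < R := one_pos.trans hR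
  obtain ⟨s, hs, hs1⟩ := exists_between (inv_lt_one_of_one_lt₀ hR)
  exact ⟨s, (inv_pos.2 hR0).trans hs, hs1, (inv_lt_iff_one_lt_mul₀ hR0).1 hs⟩

lemma circleAverage_mul_conj_ne_zero (hR : 1 < R) (hφ : IsConvexOnBall φ R)
    (hp : IsStarlikeOnBall p B R) : circleAverage (fun ζ => φ ζ * conj (p ζ)) 0 1 ≠ 0 := by
  obtain ⟨s, hs, hs1, hRs⟩ := exists_one_lt_mul_of_one_lt hR
  simpa using circleAverage_ne_one_sub_mul_szego hφ hp hs hs1 hRs (η := 1) (u := 1) (by simp)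
    (by simp)

lemma exists_one_sub_mul_eq_one {X : ℂ} (hX : 2 * X.re = 1) :
    ∃ u ∈ sphere (0 : ℂ) 1, (1 - u) * X = 1 := by
  have hX0 : X ≠ 0 := by
    rintro rfl
    simp at hX
  have hnorm : ‖X - 1‖ = ‖X‖ := by
    rw [← sq_eq_sq₀ (norm_nonneg _) (norm_nonneg _), ← normSq_eq_norm_sq, ← normSq_eq_norm_sq,
      normSq_apply, normSq_apply, sub_re, sub_im, one_re, one_im]
    linear_combination -hX
  refine ⟨(X - 1) / X, ?_, ?_⟩
  · rw [mem_sphere_zero_iff_norm, norm_div, hnorm, div_self (norm_ne_zero_iff.2 hX0)]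
  · field_simp
    ring

lemma two_mul_re_szego_div_ne_one (hφ : IsConvexOnBall φ R) (hp : IsStarlikeOnBall p B R)
    (hs : 0 < s) (hs1 : s < 1) (hRs : 1 < s * R) {η : ℂ} (hη : η ∈ sphere (0 : ℂ) 1) :
    2 * (szego (fun ζ => φ ζ * conj (p ζ)) (s * η) /
      circleAverage (fun ζ => φ ζ * conj (p ζ)) 0 1).re ≠ 1 := by
  intro hre
  have hR : 1 < R := by nlinarith
  obtain ⟨u, hu, hu1⟩ := exists_one_sub_mul_eq_one hre
  refine circleAverage_ne_one_sub_mul_szego hφ hp hs hs1 hRs hη hu ?_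
  rwa [← mul_div_assoc, div_eq_one_iff_eq (circleAverage_mul_conj_ne_zero hR hφ hp), eq_comm]
    at hu1

lemma pos_of_ne_zero_of_circleAverage_pos {Q : ℂ → ℝ} (hQ : ContinuousOn Q (sphere 0 1))
    (hne : ∀ η ∈ sphere (0 : ℂ) 1, Q η ≠ 0) (hpos : 0 < circleAverage Q 0 1) :
    ∀ η ∈ sphere (0 : ℂ) 1, 0 < Q η := by
  intro η hη
  by_contra! hle
  have hneg : ∀ ζ ∈ sphere (0 : ℂ) 1, Q ζ < 0 := by
    intro ζ hζ
    by_contra! hge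
    obtain ⟨ξ, hξ, hξ0⟩ := (isPreconnected_sphere (by simp [rank_real_complex]) (0 : ℂ) 1)
      |>.intermediate_value hη hζ hQ ⟨hle, hge⟩
    exact hne ξ hξ hξ0
  exact hpos.not_ge (Real.circleAverage_mono_on_of_le_circle (circleIntegrable_of_continuousOn hQ)
    fun ζ hζ => (hneg ζ (by rwa [abs_one] at hζ)).le)

lemma circleAverage_smul_mem_of_convex {Q : ℂ → ℝ} {G : ℂ → ℂ} {U : Set ℂ} (hU : Convex ℝ U)
    (hUo : IsOpen U) (hQ : ContinuousOn Q (sphere 0 1)) (hG : ContinuousOn G (sphere 0 1))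
    (hpos : ∀ η ∈ sphere (0 : ℂ) 1, 0 < Q η) (hmean : circleAverage Q 0 1 = 1)
    (hmem : ∀ η ∈ sphere (0 : ℂ) 1, G η ∈ U) : circleAverage (fun η => Q η • G η) 0 1 ∈ U := by
  by_contra hnot
  obtain ⟨ℓ, hℓ⟩ := geometric_hahn_banach_open_point hU hUo hnot
  set m := circleAverage (fun η => Q η • G η) 0 1 with hm
  have hQG := hQ.fun_smul hG
  have hℓm : circleAverage (fun η => Q η * ℓ (G η)) 0 1 = ℓ m := by
    rw [hm, ← ℓ.circleAverage_comp_comm (circleIntegrable_of_continuousOn hQG)]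
    simp only [Function.comp_def, map_smul, smul_eq_mul]
  have hQℓ : ContinuousOn (fun η => Q η * ℓ (G η)) (sphere 0 1) :=
    hQ.fun_mul (ℓ.continuous.comp_continuousOn hG)
  have hQm : ContinuousOn (fun η => ℓ m * Q η) (sphere 0 1) := continuousOn_const.fun_mul hQ
  have hgap : 0 < circleAverage (fun η => ℓ m * Q η - Q η * ℓ (G η)) 0 1 := by
    refine circleAverage_pos_of_pos_off_countable (hQm.sub hQℓ) 0 countable_empty fun t _ _ => ?_
    have ht := circleMap_zero_one_mem t
    rw [mul_comm, ← mul_sub]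
    exact mul_pos (hpos _ ht) (sub_pos.2 (hℓ _ (hmem _ ht)))
  have hℓQ : circleAverage (fun η => ℓ m * Q η) 0 1 = ℓ m := by
    simpa [hmean] using Real.circleAverage_fun_smul (a := ℓ m) (f := Q) (c := 0) (R := 1)
  rw [Real.circleAverage_fun_sub (circleIntegrable_of_continuousOn hQm)
    (circleIntegrable_of_continuousOn hQℓ), hℓm, hℓQ, sub_self] at hgap
  exact hgap.false

end Duality

section DualityTheorem

lemma circleAverage_two_re_sub_one_smul_conj {X G : ℂ → ℂ} (hX : ContinuousOn X (sphere 0 1))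
    (hG : ContinuousOn G (sphere 0 1))
    (hXG : circleAverage (fun η => X η * G η) 0 1 = circleAverage G 0 1) :
    circleAverage (fun η => (2 * (X η).re - 1) • conj (G η)) 0 1 =
      circleAverage (fun η => X η * conj (G η)) 0 1 := by
  have hGc := continuousOn_conj_comp hG
  have hXG' := hX.fun_mul hG
  have hXGc := continuousOn_conj_comp hXG'
  have hXcG := hX.fun_mul hGc
  have hsplit : (fun η => (2 * (X η).re - 1) • conj (G η)) =
      fun η => X η * conj (G η) + (conj (X η * G η) - conj (G η)) := by
    ext1 η
    have hre : ((2 * (X η).re - 1 : ℝ) : ℂ) = X η + conj (X η) - 1 := by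
      rw [add_conj, ofReal_sub, ofReal_one]
    rw [real_smul, hre, map_mul]
    ring
  rw [hsplit, Real.circleAverage_fun_add (circleIntegrable_of_continuousOn hXcG)
      (circleIntegrable_of_continuousOn (hXGc.fun_sub hGc)),
    Real.circleAverage_fun_sub (circleIntegrable_of_continuousOn hXGc)
      (circleIntegrable_of_continuousOn hGc),
    circleAverage_conj hXG', circleAverage_conj hG, hXG, sub_self, add_zero]

lemma circleAverage_two_re_sub_one {X : ℂ → ℂ} (hX : ContinuousOn X (sphere 0 1)) :
    circleAverage (fun η => 2 * (X η).re - 1) 0 1 = 2 * (circleAverage X 0 1).re - 1 := by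
  have hre : ContinuousOn (fun η => (X η).re) (sphere 0 1) := continuous_re.comp_continuousOn hX
  have hsmul :=
    Real.circleAverage_fun_smul (a := (2 : ℝ)) (f := fun η => (X η).re) (c := 0) (R := 1)
  have hcomm := reCLM.circleAverage_comp_comm (circleIntegrable_of_continuousOn hX)
  simp only [smul_eq_mul, Function.comp_def, reCLM_apply] at hsmul hcomm
  rw [Real.circleAverage_fun_sub
    (circleIntegrable_of_continuousOn (continuousOn_const.fun_mul hre))
    (circleIntegrable_const _ _ _), Real.circleAverage_const, hsmul, hcomm]

lemma circleAverage_mul_conj_mem_of_convex {X G : ℂ → ℂ} {U : Set ℂ}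
    (hX : ContinuousOn X (sphere 0 1)) (hX1 : circleAverage X 0 1 = 1)
    (hne : ∀ η ∈ sphere (0 : ℂ) 1, 2 * (X η).re ≠ 1) (hG : ContinuousOn G (sphere 0 1))
    (hXG : circleAverage (fun η => X η * G η) 0 1 = circleAverage G 0 1) (hU : Convex ℝ U)
    (hUo : IsOpen U) (hGU : ∀ η ∈ sphere (0 : ℂ) 1, conj (G η) ∈ U) :
    circleAverage (fun η => X η * conj (G η)) 0 1 ∈ U := by
  have hmean : circleAverage (fun η => 2 * (X η).re - 1) 0 1 = 1 := by
    rw [circleAverage_two_re_sub_one hX, hX1]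
    norm_num
  have hQ : ContinuousOn (fun η => 2 * (X η).re - 1) (sphere 0 1) :=
    (continuousOn_const.fun_mul (continuous_re.comp_continuousOn hX)).fun_sub continuousOn_const
  have hpos := pos_of_ne_zero_of_circleAverage_pos hQ (fun η hη => sub_ne_zero.2 (hne η hη))
    (by rw [hmean]; exact one_pos)
  rw [← circleAverage_two_re_sub_one_smul_conj hX hG hXG]
  exact circleAverage_smul_mem_of_convex hU hUo hQ (continuousOn_conj_comp hG) hpos hmean hGU

lemma circleAverage_mul_conj_div_mem_of_convex {R : ℝ} {φ p B G : ℂ → ℂ} {U : Set ℂ} (hR : 1 < R)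
    (hφ : IsConvexOnBall φ R) (hp : IsStarlikeOnBall p B R) (hG : DifferentiableOn ℂ G (ball 0 R))
    (hU : Convex ℝ U) (hUo : IsOpen U) (hGU : ∀ z ∈ ball 0 R, conj (G z) ∈ U) :
    circleAverage (fun ζ => φ ζ * conj (p ζ) * conj (G ζ)) 0 1 /
      circleAverage (fun ζ => φ ζ * conj (p ζ)) 0 1 ∈ U := by
  obtain ⟨s, hs, hs1, hRs⟩ := exists_one_lt_mul_of_one_lt hR
  have hL := circleAverage_mul_conj_ne_zero hR hφ hp
  have habs : |s| < 1 := by rwa [abs_of_pos hs]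
  have hs0 : (s : ℂ) ≠ 0 := by exact_mod_cast hs.ne'
  have hsphere : sphere (0 : ℂ) 1 ⊆ ball 0 R := sphere_subset_ball hR
  have hmaps : MapsTo (fun z : ℂ => z / s) (closedBall 0 1) (ball 0 R) := fun _ hz =>
    div_ofReal_mem_ball hs (closedBall_subset_ball hRs hz)
  have hGs : DifferentiableOn ℂ (fun z => G (z / s)) (closedBall 0 1) :=
    hG.comp (by fun_prop) hmaps
  have hh : ContinuousOn (fun ζ => φ ζ * conj (p ζ)) (sphere 0 1) :=
    (hφ.differentiableOn.continuousOn.mono hsphere).fun_mul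
      (continuousOn_conj_comp (hp.differentiableOn.continuousOn.mono hsphere))
  set h : ℂ → ℂ := fun ζ => φ ζ * conj (p ζ)
  have hmean {F : ℂ → ℂ} (hF : DifferentiableOn ℂ F (closedBall 0 1)) :
      circleAverage (fun η => szego h (s * η) / circleAverage h 0 1 * F η) 0 1 = F 0 := by
    simp only [div_eq_inv_mul, mul_assoc]
    rw [circleAverage_const_mul, circleAverage_szego_mul_of_differentiableOn hh hF habs,
      inv_mul_cancel_left₀ hL]
  have hmem := circleAverage_mul_conj_mem_of_convex
    (X := fun η => szego h (s * η) / circleAverage h 0 1)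
    ((continuousOn_szego hh habs).div_const _) (by simpa using hmean (differentiableOn_const 1))
    (fun η hη => two_mul_re_szego_div_ne_one hφ hp hs hs1 hRs hη)
    (hGs.continuousOn.mono sphere_subset_closedBall)
    ((hmean hGs).trans (circleAverage_eq_apply_zero one_pos hGs).symm) hU hUo
    fun η hη => hGU _ (hmaps (sphere_subset_closedBall hη))
  simp only [div_eq_inv_mul _ (circleAverage h 0 1), mul_assoc] at hmem
  rw [circleAverage_const_mul, circleAverage_szego_mul_conj hh hGs habs] at hmem
  simpa only [mul_div_cancel_left₀ _ hs0, ← div_eq_inv_mul] using hmem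

end DualityTheorem

section Univalent

open Filter Topology

variable {ψ χ : ℂ → ℂ} {U : Set ℂ} {z : ℂ}

lemma not_eventually_eq_const_of_injOn (hi : InjOn ψ U) (hU : IsOpen U) (hz : z ∈ U) :
    ¬ ∀ᶠ x in 𝓝 z, ψ x = ψ z := fun h => by
  obtain ⟨x, ⟨hx, hxU⟩, hne⟩ := ((h.and (hU.mem_nhds hz)).filter_mono
    (nhdsWithin_le_nhds (s := {z}ᶜ))).and self_mem_nhdsWithin |>.exists
  exact hne (hi hxU hz hx)

lemma nhds_le_map_nhds_of_injOn (hd : DifferentiableOn ℂ ψ U) (hi : InjOn ψ U) (hU : IsOpen U)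
    (hz : z ∈ U) : 𝓝 (ψ z) ≤ map ψ (𝓝 z) :=
  (hd.analyticAt (hU.mem_nhds hz)).eventually_constant_or_nhds_le_map_nhds.resolve_left
    (not_eventually_eq_const_of_injOn hi hU hz)

lemma isOpen_image_of_injOn (hd : DifferentiableOn ℂ ψ U) (hi : InjOn ψ U) (hU : IsOpen U) :
    IsOpen (ψ '' U) := by
  rw [isOpen_iff_mem_nhds]
  rintro _ ⟨z, hz, rfl⟩
  exact nhds_le_map_nhds_of_injOn hd hi hU hz (image_mem_map (hU.mem_nhds hz))

lemma eventually_deriv_ne_zero_of_injOn (hd : DifferentiableOn ℂ ψ U) (hi : InjOn ψ U)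
    (hU : IsOpen U) (hz : z ∈ U) : ∀ᶠ x in 𝓝[≠] z, deriv ψ x ≠ 0 := by
  have hψ' : AnalyticAt ℂ (deriv ψ) z := (hd.analyticAt (hU.mem_nhds hz)).deriv
  refine hψ'.eventually_eq_zero_or_eventually_ne_zero.resolve_left fun h =>
    not_eventually_eq_const_of_injOn hi hU hz ?_
  obtain ⟨ε, hε, hball⟩ := eventually_nhds_iff_ball.1 (h.and (hU.mem_nhds hz))
  filter_upwards [ball_mem_nhds z hε] with x hx
  exact isOpen_ball.is_const_of_deriv_eq_zero (convex_ball z ε).isPreconnected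
    (hd.mono fun y hy => (hball y hy).2) (fun y hy => (hball y hy).1) hx (mem_ball_self hε)

lemma continuousAt_leftInvOn (hχ : LeftInvOn χ ψ U) (hd : DifferentiableOn ℂ ψ U) (hU : IsOpen U)
    (hz : z ∈ U) : ContinuousAt χ (ψ z) := by
  refine Tendsto.mono_left ?_ (nhds_le_map_nhds_of_injOn hd hχ.injOn hU hz)
  rw [hχ hz, tendsto_map'_iff]
  exact tendsto_id.congr' ((hU.eventually_mem hz).mono fun x hx => (hχ hx).symm)

/- Away from the zeros of `ψ'` this is the inverse function theorem; those zeros are isolated, hence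
removable for the continuous function `χ`. -/
lemma differentiableOn_leftInvOn (hχ : LeftInvOn χ ψ U) (hd : DifferentiableOn ℂ ψ U)
    (hU : IsOpen U) : DifferentiableOn ℂ χ (ψ '' U) := by
  rintro _ ⟨z, hz, rfl⟩
  have hinv : ∀ y ∈ ψ '' U, ψ (χ y) = y := forall_mem_image.2 fun x hx => by rw [hχ hx]
  have hdiff : ∀ x ∈ U, deriv ψ x ≠ 0 → DifferentiableAt ℂ χ (ψ x) := fun x hx hne => by
    have hψx : HasDerivAt ψ (deriv ψ x) (χ (ψ x)) := by
      rw [hχ hx]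
      exact (hd.differentiableAt (hU.mem_nhds hx)).hasDerivAt
    refine (HasDerivAt.of_local_left_inverse (continuousAt_leftInvOn hχ hd hU hx) hψx hne
      ?_).differentiableAt
    exact ((isOpen_image_of_injOn hd hχ.injOn hU).eventually_mem ⟨x, hx, rfl⟩).mono hinv
  refine (analyticAt_of_differentiable_on_punctured_nhds_of_continuousAt ?_
    (continuousAt_leftInvOn hχ hd hU hz)).differentiableAt.differentiableWithinAt
  rw [eventually_nhdsWithin_iff]
  refine nhds_le_map_nhds_of_injOn hd hχ.injOn hU hz (mem_map.2 ?_)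
  filter_upwards [hU.mem_nhds hz,
    eventually_nhdsWithin_iff.1 (eventually_deriv_ne_zero_of_injOn hd hχ.injOn hU hz)]
    with x hx hne hψx
  exact hdiff x hx (hne fun h => hψx (congrArg ψ h))

lemma subordinate_of_mapsTo {g : ℂ → ℂ} (hd : DifferentiableOn ℂ ψ 𝔻) (hi : InjOn ψ 𝔻)
    (hg : DifferentiableOn ℂ g 𝔻) (h₀ : g 0 = ψ 0) (hmaps : MapsTo g 𝔻 (ψ '' 𝔻)) :
    Subordinate g ψ := by
  have hχ : LeftInvOn (Function.invFunOn ψ 𝔻) ψ 𝔻 := hi.leftInvOn_invFunOn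
  refine ⟨fun z => Function.invFunOn ψ 𝔻 (g z),
    (differentiableOn_leftInvOn hχ hd isOpen_ball).comp hg hmaps,
    (congrArg _ h₀).trans (hχ (mem_ball_self one_pos)),
    fun z hz => Function.invFunOn_mem (hmaps hz),
    fun z hz => (Function.invFunOn_eq (hmaps hz)).symm⟩

end Univalent

section PowerSeries

variable {f : ℂ → ℂ} {a : ℕ → ℂ}

lemma apply_zero_of_hasSum (h : HasSum (fun n => a n * 0 ^ n) (f 0)) : f 0 = a 0 := by
  refine h.unique ?_
  convert hasSum_single 0 fun n hn => ?_ using 1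
  · simp
  · simp [hn]

lemma summable_norm_mul_pow (hf : ∀ z ∈ 𝔻, HasSum (fun n => a n * z ^ n) (f z)) {ρ : ℝ}
    (hρ : 0 ≤ ρ) (hρ1 : ρ < 1) : Summable fun n => ‖a n‖ * ρ ^ n := by
  have h := (hf ρ (by simpa [𝔻, abs_of_nonneg hρ] using hρ1)).summable.norm
  simpa only [norm_mul, norm_pow, Complex.norm_real, Real.norm_of_nonneg hρ] using h

lemma norm_mul_pow_le {ρ : ℝ} {z : ℂ} (hz : z ∈ ball 0 ρ) (n : ℕ) :
    ‖a n * z ^ n‖ ≤ ‖a n‖ * ρ ^ n := by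
  rw [norm_mul, norm_pow]
  have := mem_ball_zero_iff.1 hz
  gcongr

lemma differentiableOn_of_hasSum (hf : ∀ z ∈ 𝔻, HasSum (fun n => a n * z ^ n) (f z)) :
    DifferentiableOn ℂ f 𝔻 := by
  intro z hz
  obtain ⟨ρ, hzρ, hρ1⟩ := exists_between (mem_ball_zero_iff.1 hz)
  have hρ : 0 ≤ ρ := (norm_nonneg z).trans hzρ.le
  have h := differentiableOn_tsum_of_summable_norm (summable_norm_mul_pow hf hρ hρ1)
    (F := fun n z => a n * z ^ n) (fun n => by fun_prop) isOpen_ball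
    fun n x hx => norm_mul_pow_le hx n
  refine ((h.congr fun x hx => ?_).differentiableAt
    (isOpen_ball.mem_nhds (mem_ball_zero_iff.2 hzρ))).differentiableWithinAt
  exact (hf x (ball_subset_ball hρ1.le hx)).tsum_eq.symm

lemma hasSum_deriv_of_hasSum (hf : ∀ z ∈ 𝔻, HasSum (fun n => a n * z ^ n) (f z)) {z : ℂ}
    (hz : z ∈ 𝔻) : HasSum (fun n => a n * (n * z ^ (n - 1))) (deriv f z) := by
  obtain ⟨ρ, hzρ, hρ1⟩ := exists_between (mem_ball_zero_iff.1 hz)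
  have hρ : 0 ≤ ρ := (norm_nonneg z).trans hzρ.le
  have hzρ' : z ∈ ball (0 : ℂ) ρ := mem_ball_zero_iff.2 hzρ
  have h := hasSum_deriv_of_summable_norm (summable_norm_mul_pow hf hρ hρ1)
    (F := fun n z => a n * z ^ n) (fun n => by fun_prop) isOpen_ball
    (fun n x hx => norm_mul_pow_le hx n) hzρ'
  have heq : (fun x => ∑' n, a n * x ^ n) =ᶠ[nhds z] f :=
    Filter.eventually_of_mem (isOpen_ball.mem_nhds hzρ') fun x hx =>
      (hf x (ball_subset_ball hρ1.le hx)).tsum_eq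
  rw [heq.deriv_eq] at h
  simpa using h

lemma deriv_zero_of_hasSum (hf : ∀ z ∈ 𝔻, HasSum (fun n => a n * z ^ n) (f z)) :
    deriv f 0 = a 1 := by
  refine (hasSum_deriv_of_hasSum hf (mem_ball_self one_pos)).unique ?_
  convert hasSum_single 1 fun n hn => ?_ using 1
  · simp
  · rcases n with _ | _ | n <;> simp_all

lemma hasSum_mul_deriv_of_hasSum (hf : ∀ z ∈ 𝔻, HasSum (fun n => a n * z ^ n) (f z)) {z : ℂ}
    (hz : z ∈ 𝔻) : HasSum (fun n => n * a n * z ^ n) (z * deriv f z) := by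
  refine ((hasSum_deriv_of_hasSum hf hz).mul_left z).congr_fun fun n => ?_
  rcases n with _ | n
  · simp
  · rw [Nat.add_sub_cancel, pow_succ]
    ring

end PowerSeries

section HadamardProduct

lemma hasSum_circleAverage {E : Type*} [NormedAddCommGroup E] [NormedSpace ℝ E] {c : ℂ} {R : ℝ}
    (hR : 0 ≤ R) {f : ℕ → ℂ → E} {F : ℂ → E} {u : ℕ → ℝ}
    (hf : ∀ n, ContinuousOn (f n) (sphere c R)) (hu : Summable u)
    (hfu : ∀ n, ∀ ζ ∈ sphere c R, ‖f n ζ‖ ≤ u n)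
    (hF : ∀ ζ ∈ sphere c R, HasSum (fun n => f n ζ) (F ζ)) :
    HasSum (fun n => circleAverage (f n) c R) (circleAverage F c R) := by
  refine (intervalIntegral.hasSum_integral_of_dominated_convergence (fun n _ => u n) (fun n => ?_)
    (fun n => .of_forall fun t _ => hfu n _ (circleMap_mem_sphere c hR t))
    (.of_forall fun _ _ => hu) (by simp)
    (.of_forall fun t _ => hF _ (circleMap_mem_sphere c hR t))).const_smul _
  exact ((hf n).comp_continuous (continuous_circleMap c R)
    (circleMap_mem_sphere c hR)).aestronglyMeasurable

lemma circleAverage_pow (n : ℕ) : circleAverage (fun ζ => ζ ^ n) 0 1 = 0 ^ n :=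
  circleAverage_eq_apply_zero (h := fun ζ => ζ ^ n) one_pos (by fun_prop)

lemma circleAverage_pow_mul_conj_pow (n m : ℕ) :
    circleAverage (fun ζ => ζ ^ n * conj ζ ^ m) 0 1 = if n = m then 1 else 0 := by
  rcases le_total m n with h | h
  · obtain ⟨l, rfl⟩ := Nat.exists_eq_add_of_le h
    have hcongr : EqOn (fun ζ : ℂ => ζ ^ (m + l) * conj ζ ^ m) (fun ζ => ζ ^ l) (sphere 0 |1|) :=
      fun ζ hζ => by
        rw [abs_one] at hζ
        simp only [pow_add, mul_right_comm _ (ζ ^ l), ← mul_pow, mul_conj_of_mem_sphere hζ, one_pow,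
          one_mul]
    rw [Real.circleAverage_congr_sphere hcongr, circleAverage_pow]
    rcases l with _ | l <;> simp
  · obtain ⟨l, rfl⟩ := Nat.exists_eq_add_of_le h
    have hcongr : EqOn (fun ζ : ℂ => ζ ^ n * conj ζ ^ (n + l)) (fun ζ => conj (ζ ^ l))
        (sphere 0 |1|) := fun ζ hζ => by
        rw [abs_one] at hζ
        simp only [pow_add, ← mul_assoc, ← mul_pow, mul_conj_of_mem_sphere hζ, one_pow, one_mul,
          map_pow]
    rw [Real.circleAverage_congr_sphere hcongr, circleAverage_conj (by fun_prop), circleAverage_pow]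
    rcases l with _ | l <;> simp

variable {f g : ℂ → ℂ} {a b : ℕ → ℂ} {u w : ℂ}

lemma mul_mem_disk_of_mem_sphere (hw : ‖w‖ < 1) {ζ : ℂ} (hζ : ζ ∈ sphere (0 : ℂ) 1) :
    w * ζ ∈ 𝔻 := by
  rwa [𝔻, mem_ball_zero_iff, norm_mul, mem_sphere_zero_iff_norm.1 hζ, mul_one]

lemma circleAverage_pow_mul_comp_conj (hg : ∀ z ∈ 𝔻, HasSum (fun n => b n * z ^ n) (g z))
    (hw : ‖w‖ < 1) (n : ℕ) :
    circleAverage (fun ζ => ζ ^ n * g (w * conj ζ)) 0 1 = b n * w ^ n := by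
  have h := hasSum_circleAverage (c := 0) zero_le_one (F := fun ζ => ζ ^ n * g (w * conj ζ))
    (f := fun m ζ => b m * w ^ m * (ζ ^ n * conj ζ ^ m)) (u := fun m => ‖b m‖ * ‖w‖ ^ m)
    (fun m => by fun_prop) (summable_norm_mul_pow hg (norm_nonneg w) hw) (fun m ζ hζ => ?_)
    (fun ζ hζ => ?_)
  · simp only [circleAverage_const_mul, circleAverage_pow_mul_conj_pow, mul_ite, mul_one,
      mul_zero, eq_comm (a := n)] at h
    exact (h.unique (hasSum_single n fun m hm => if_neg hm)).trans (if_pos rfl)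
  · rw [mem_sphere_zero_iff_norm] at hζ
    simp [hζ]
  · refine ((hg _ (mul_mem_disk_of_mem_sphere hw (conj_mem_sphere hζ))).mul_left (ζ ^ n)).congr_fun
      fun m => ?_
    ring

lemma hasSum_circleAverage_mul_comp_conj (hf : ∀ z ∈ 𝔻, HasSum (fun n => a n * z ^ n) (f z))
    (hg : ∀ z ∈ 𝔻, HasSum (fun n => b n * z ^ n) (g z)) (hu : ‖u‖ < 1) (hw : ‖w‖ < 1) :
    HasSum (fun n => a n * b n * (u * w) ^ n)
      (circleAverage (fun ζ => f (u * ζ) * g (w * conj ζ)) 0 1) := by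
  have hmem : ∀ ζ ∈ sphere (0 : ℂ) 1, w * conj ζ ∈ 𝔻 := fun ζ hζ =>
    mul_mem_disk_of_mem_sphere hw (conj_mem_sphere hζ)
  have hcont : ContinuousOn (fun ζ => g (w * conj ζ)) (sphere 0 1) :=
    (differentiableOn_of_hasSum hg).continuousOn.comp (by fun_prop) hmem
  obtain ⟨M, hM⟩ := (isCompact_sphere (0 : ℂ) 1).exists_bound_of_continuousOn hcont
  have h := hasSum_circleAverage (c := 0) zero_le_one (F := fun ζ => f (u * ζ) * g (w * conj ζ))
    (f := fun n ζ => a n * u ^ n * (ζ ^ n * g (w * conj ζ))) (u := fun n => ‖a n‖ * ‖u‖ ^ n * M)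
    (fun n => ?_) ((summable_norm_mul_pow hf (norm_nonneg u) hu).mul_right M) (fun n ζ hζ => ?_)
    (fun ζ hζ => ?_)
  · simp only [circleAverage_const_mul, circleAverage_pow_mul_comp_conj hg hw] at h
    exact h.congr_fun fun n => by ring
  · exact continuousOn_const.mul ((continuousOn_pow n).mul hcont)
  · rw [norm_mul, norm_mul, norm_pow, norm_mul, norm_pow, mem_sphere_zero_iff_norm.1 hζ, one_pow,
      one_mul]
    exact mul_le_mul_of_nonneg_left (hM ζ hζ) (by positivity)
  · exact ((hf _ (mul_mem_disk_of_mem_sphere hu hζ)).mul_right _).congr_fun fun n => by ring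

end HadamardProduct

section MaMindaClasses

variable {ψ f g F φ p B : ℂ → ℂ} {a b : ℕ → ℂ} {w : ℂ} {R : ℝ}

lemma mul_mem_disk (hw₀ : w ≠ 0) (hw : ‖w‖ * R ≤ 1) {z : ℂ} (hz : z ∈ ball 0 R) : w * z ∈ 𝔻 := by
  rw [𝔻, mem_ball_zero_iff, norm_mul]
  exact (mul_lt_mul_of_pos_left (mem_ball_zero_iff.1 hz) (norm_pos_iff.2 hw₀)).trans_le hw

lemma mul_conj_mem_disk (hw₀ : w ≠ 0) (hw : ‖w‖ * R ≤ 1) {z : ℂ} (hz : z ∈ ball 0 R) :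
    w * conj z ∈ 𝔻 :=
  mul_mem_disk hw₀ hw (by rwa [mem_ball_zero_iff, norm_conj, ← mem_ball_zero_iff])

lemma IsConvexFn.isConvexOnBall_comp_mul (hf : IsConvexFn f) (hw₀ : w ≠ 0) (hw : ‖w‖ * R ≤ 1) :
    IsConvexOnBall (fun z => f (w * z)) R := by
  obtain ⟨⟨hd, -⟩, hne, hre⟩ := hf
  have hderiv : deriv (fun z => f (w * z)) = fun z => w * deriv f (w * z) :=
    funext fun z => deriv_comp_mul_left w f z
  have hderiv₂ : ∀ z, deriv (fun z => w * deriv f (w * z)) z = w * (w * deriv (deriv f) (w * z)) :=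
    fun z => by rw [deriv_const_mul_field, deriv_comp_mul_left, smul_eq_mul]
  refine ⟨hd.comp (by fun_prop) fun z hz => mul_mem_disk hw₀ hw hz, fun z hz => ?_, fun z hz => ?_⟩
  · rw [hderiv]
    exact mul_ne_zero hw₀ (hne _ (mul_mem_disk hw₀ hw hz))
  · rw [hderiv, hderiv₂, mul_left_comm z, mul_div_mul_left _ _ hw₀, ← mul_assoc, mul_comm z]
    exact hre _ (mul_mem_disk hw₀ hw hz)

lemma IsStarlikeOnBall.conj_comp_mul_conj (hp : IsStarlikeOnBall p B 1) (hw₀ : w ≠ 0)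
    (hw : ‖w‖ * R ≤ 1) :
    IsStarlikeOnBall (fun z => conj (p (w * conj z))) (fun z => conj (B (w * conj z))) R := by
  have hmem {z : ℂ} (hz : z ∈ ball 0 R) : w * conj z ∈ ball 0 1 := mul_conj_mem_disk hw₀ hw hz
  have hconj {h : ℂ → ℂ} (hh : DifferentiableOn ℂ h (ball 0 1)) {z : ℂ} (hz : z ∈ ball 0 R) :
      HasDerivAt (fun z => conj (h (w * conj z))) (conj (w * deriv h (w * conj z))) z := by
    have hd := (hh.differentiableAt (isOpen_ball.mem_nhds (hmem hz))).hasDerivAt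
    have hcomp := ((hd.comp (conj z) ((hasDerivAt_id (conj z)).const_mul w))).conj_conj
    rwa [conj_conj, mul_one, mul_comm] at hcomp
  refine ⟨fun z hz => (hconj hp.differentiableOn hz).differentiableAt.differentiableWithinAt,
    by simp [hp.apply_zero], fun z hz hz₀ => ?_,
    fun z hz => (hconj hp.differentiableOn_logDeriv hz).differentiableAt.differentiableWithinAt,
    by simp [hp.logDeriv_apply_zero], fun z hz => ?_, fun z hz => ?_⟩
  · exact (map_ne_zero _).2
      (hp.ne_zero _ (hmem hz) (mul_ne_zero hw₀ ((map_ne_zero _).2 hz₀)))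
  · rw [conj_re]
    exact hp.logDeriv_re_pos _ (hmem hz)
  · rw [(hconj hp.differentiableOn hz).deriv, ← map_mul, ← hp.mul_deriv _ (hmem hz)]
    simp only [map_mul, conj_conj]
    ring

lemma StarlikeMM.exists_isStarlikeOnBall (hg : StarlikeMM ψ g) (hd : DifferentiableOn ℂ ψ 𝔻)
    (hre : ∀ z ∈ 𝔻, 0 < (ψ z).re) :
    ∃ B, IsStarlikeOnBall g B 1 ∧ MapsTo B 𝔻 (ψ '' 𝔻) := by
  obtain ⟨⟨hgd, hg₀, -⟩, hne, ω, hωd, -, hω, hgω⟩ := hg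
  refine ⟨fun z => ψ (ω z), ⟨hgd, hg₀, hne, hd.comp hωd hω, ?_, fun z hz => hre _ (hω z hz),
    fun z hz => ?_⟩, fun z hz => mem_image_of_mem ψ (hω z hz)⟩
  · simpa using (hgω 0 (mem_ball_self one_pos)).symm
  · rcases eq_or_ne z 0 with rfl | hz₀
    · simp [hg₀]
    · simp only [← hgω z hz, if_neg hz₀, div_mul_cancel₀ _ (hne z hz hz₀)]

lemma ConvexMM.isConvexFn (hf : ConvexMM ψ f) (hre : ∀ z ∈ 𝔻, 0 < (ψ z).re) : IsConvexFn f := by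
  obtain ⟨hfA, hne, ω, -, -, hω, hfω⟩ := hf
  exact ⟨hfA, hne, fun z hz => (hre _ (hω z hz)).trans_eq (congrArg re (hfω z hz).symm)⟩

/- With `z = w²`, the Hadamard product at `z` is the mean of `f(wζ) g(w ζ̄)` over the circle, and
both factors extend to the disk of radius `1 / |w| > 1`. -/
lemma ne_zero_and_mul_deriv_div_mem {U : Set ℂ} (hU : Convex ℝ U) (hUo : IsOpen U)
    (hf : ∀ z ∈ 𝔻, HasSum (fun n => a n * z ^ n) (f z))
    (hg : ∀ z ∈ 𝔻, HasSum (fun n => b n * z ^ n) (g z))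
    (hF : ∀ z ∈ 𝔻, HasSum (fun n => a n * b n * z ^ n) (F z))
    (hfc : IsConvexFn f) (hgs : IsStarlikeOnBall g B 1) (hB : MapsTo B 𝔻 U) {z : ℂ}
    (hz : z ∈ 𝔻) (hz₀ : z ≠ 0) : F z ≠ 0 ∧ z * deriv F z / F z ∈ U := by
  obtain ⟨w, rfl⟩ := IsAlgClosed.exists_eq_mul_self z
  have hw₀ : w ≠ 0 := (mul_ne_zero_iff.1 hz₀).1
  have hw1 : ‖w‖ < 1 := by
    rwa [𝔻, mem_ball_zero_iff, norm_mul, ← sq, sq_lt_one_iff₀ (norm_nonneg w)] at hz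
  have hw : ‖w‖ * ‖w‖⁻¹ ≤ 1 := (mul_inv_cancel₀ (norm_ne_zero_iff.2 hw₀)).le
  have hR : 1 < ‖w‖⁻¹ := (one_lt_inv₀ (norm_pos_iff.2 hw₀)).2 hw1
  have hφ := hfc.isConvexOnBall_comp_mul hw₀ hw
  have hp := hgs.conj_comp_mul_conj hw₀ hw
  have hL : circleAverage (fun ζ => f (w * ζ) * g (w * conj ζ)) 0 1 = F (w * w) :=
    (hasSum_circleAverage_mul_comp_conj hf hg hw1 hw1).unique (hF _ hz)
  have hg' : ∀ z ∈ 𝔻, HasSum (fun n => n * b n * z ^ n) (g z * B z) := fun z hz => by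
    rw [mul_comm, ← hgs.mul_deriv z hz]
    exact hasSum_mul_deriv_of_hasSum hg hz
  have hL' : circleAverage (fun ζ => f (w * ζ) * (g (w * conj ζ) * B (w * conj ζ))) 0 1 =
      w * w * deriv F (w * w) :=
    (hasSum_circleAverage_mul_comp_conj hf hg' hw1 hw1).unique
      ((hasSum_mul_deriv_of_hasSum hF hz).congr_fun fun n => by ring)
  have hne := circleAverage_mul_conj_ne_zero hR hφ hp
  have hmem := circleAverage_mul_conj_div_mem_of_convex hR hφ hp hp.differentiableOn_logDeriv hU hUo
    fun z hz => by
      rw [conj_conj]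
      exact hB (mul_conj_mem_disk hw₀ hw hz)
  simp only [conj_conj, mul_assoc] at hne hmem
  simp only [mul_assoc] at hL'
  rw [hL] at hne hmem
  rw [hL', ← mul_assoc] at hmem
  exact ⟨hne, hmem⟩

lemma differentiableOn_mul_deriv_div (hF : IsClassA F) (hne : ∀ z ∈ 𝔻, z ≠ 0 → F z ≠ 0) :
    DifferentiableOn ℂ (fun z => if z = 0 then 1 else z * deriv F z / F z) 𝔻 := by
  obtain ⟨hd, hF₀, hF₁⟩ := hF
  have hslope {z : ℂ} (hz₀ : z ≠ 0) : dslope F 0 z = F z / z := by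
    rw [dslope_of_ne _ hz₀, slope_def_field, hF₀, sub_zero, sub_zero]
  have hslope₀ : dslope F 0 0 = 1 := by rw [dslope_same, hF₁]
  have hslope_ne : ∀ z ∈ 𝔻, dslope F 0 z ≠ 0 := fun z hz => by
    rcases eq_or_ne z 0 with rfl | hz₀
    · rw [hslope₀]
      exact one_ne_zero
    · rw [hslope hz₀]
      exact div_ne_zero (hne z hz hz₀) hz₀
  have hslope_diff : DifferentiableOn ℂ (dslope F 0) 𝔻 :=
    (differentiableOn_dslope (ball_mem_nhds 0 one_pos)).2 hd
  refine ((hd.deriv isOpen_ball).div hslope_diff hslope_ne).congr fun z _ => ?_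
  split_ifs with hz₀
  · rw [hz₀, Pi.div_apply, hF₁, hslope₀, div_one]
  · rw [Pi.div_apply, hslope hz₀, div_div_eq_mul_div, mul_comm]

lemma hasSum_section (c : ℕ → ℂ) (s : Finset ℕ) (r z : ℂ) :
    HasSum (fun n => c n * (if n ∈ s then r ^ n / r else 0) * z ^ n)
      ((∑ i ∈ s, c i * (r * z) ^ i) / r) := by
  have hsum : (∑ i ∈ s, c i * (r * z) ^ i) / r =
      ∑ i ∈ s, c i * (if i ∈ s then r ^ i / r else 0) * z ^ i := by
    rw [Finset.sum_div]
    refine Finset.sum_congr rfl fun i hi => ?_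
    rw [if_pos hi, mul_pow]
    ring
  rw [hsum]
  exact hasSum_sum_of_ne_finset_zero fun n hn => by rw [if_neg hn, mul_zero, zero_mul]

end MaMindaClasses

theorem stmt12_general {ψ f g F : ℂ → ℂ} {a b : ℕ → ℂ} (hψ : DifferentiableOn ℂ ψ 𝔻)
    (hψi : InjOn ψ 𝔻) (hψre : ∀ z ∈ 𝔻, 0 < (ψ z).re) (hconv : Convex ℝ (ψ '' 𝔻))
    (hf : ∀ z ∈ 𝔻, HasSum (fun n => a n * z ^ n) (f z))
    (hg : ∀ z ∈ 𝔻, HasSum (fun n => b n * z ^ n) (g z))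
    (hF : ∀ z ∈ 𝔻, HasSum (fun n => a n * b n * z ^ n) (F z))
    (hfc : IsConvexFn f) (hgs : StarlikeMM ψ g) : StarlikeMM ψ F := by
  obtain ⟨B, hgB, hB⟩ := hgs.exists_isStarlikeOnBall hψ hψre
  have hmem {z : ℂ} (hz : z ∈ 𝔻) (hz₀ : z ≠ 0) : F z ≠ 0 ∧ z * deriv F z / F z ∈ ψ '' 𝔻 :=
    ne_zero_and_mul_deriv_div_mem hconv (isOpen_image_of_injOn hψ hψi isOpen_ball) hf hg hF hfc hgB
      hB hz hz₀
  have h0 : (0 : ℂ) ∈ 𝔻 := mem_ball_self one_pos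
  have hψ₀ : (1 : ℂ) ∈ ψ '' 𝔻 := hgB.logDeriv_apply_zero ▸ hB h0
  have hFA : IsClassA F := by
    refine ⟨differentiableOn_of_hasSum hF, ?_, ?_⟩
    · rw [apply_zero_of_hasSum (hF 0 h0), ← apply_zero_of_hasSum (hf 0 h0), hfc.1.2.1, zero_mul]
    · rw [deriv_zero_of_hasSum hF, ← deriv_zero_of_hasSum hf, ← deriv_zero_of_hasSum hg, hfc.1.2.2,
        hgs.1.2.2, one_mul]
  have hne : ∀ z ∈ 𝔻, z ≠ 0 → F z ≠ 0 := fun z hz hz₀ => (hmem hz hz₀).1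
  refine ⟨hFA, hne, subordinate_of_mapsTo hψ hψi (differentiableOn_mul_deriv_div hFA hne) ?_
    fun z hz => ?_⟩
  · obtain ⟨-, -, ω, -, hω₀, -, hgω⟩ := hgs
    simpa [hω₀] using hgω 0 h0
  · split_ifs with hz₀
    exacts [hψ₀, (hmem hz hz₀).2]

theorem stmt12 (ψ : ℂ → ℂ) (hψ : MaMinda ψ) (hconv : Convex ℝ (ψ '' 𝔻))
    (k : ℕ) (hk : 2 ≤ k) (r : ℝ) (h0 : 0 < r) (h1 : r ≤ 1)
    (hgk : StarlikeMM ψ (fun z => (∑ i ∈ Finset.Icc 1 k, ((r:ℂ)*z) ^ i) / (r:ℂ)))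
    (f : ℂ → ℂ) (a : ℕ → ℂ) (ha0 : a 0 = 0) (ha1 : a 1 = 1)
    (hrep : ∀ z ∈ 𝔻, HasSum (fun n => a n * z^n) (f z))
    (hfC : ConvexMM ψ f) :
    StarlikeMM ψ (fun z => (∑ i ∈ Finset.Icc 1 k, a i * ((r:ℂ)*z)^i) / (r:ℂ)) :=
  stmt12_general hψ.1 hψ.2.1 hψ.2.2.1 hconv hrep
    (fun z _ => by simpa using hasSum_section 1 (Finset.Icc 1 k) r z)
    (fun z _ => hasSum_section a (Finset.Icc 1 k) r z) (hfC.isConvexFn hψ.2.2.1) hgk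
end
end

section
/- Let 0 < q < 1 and let α satisfy (1 − q)/(2(1 + q)) ≤ α < 1. Set r_α = (√(α²(1 − q)² + 4q) − α(1 + q))/(2q(1 + α)). If f is a convex function (f ∈ C), then G(z) = (f(z) − f(qz))/(1 − q) satisfies G(z) ≠ 0 and Re(zG'(z)/G(z)) > α for all z with 0 < |z| < r_α; that is, z·d_q f(z) is starlike of order α on |z| < r_α. -/
open Complex Metric Set

noncomputable section

/-!
The image under a convex function `f` of a circle `|w| = r` is a curve whose tangent angle
`arg (i w f'(w))` increases by exactly `2π`. Hence along that circle the derivative of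
`Re ((f z - f w) · conj (z f'(z)))` changes sign only once between two consecutive visits to `z`, so
this quantity is positive for `w ≠ z`; the maximum principle extends this to `|w| ≤ |z|`, which
shows that `f` is injective. On `|z| = |w|` the fraction `(z + w) / (z - w)` is purely imaginary, so
the chord inequality says that `2 z f'(z) / (f z - f w) - (z + w) / (z - w)` has nonnegative real
part there, and two applications of the maximum principle, first in `w` and then in `z`, give the
same on the whole bidisk. This kernel is `1` at `z = 0`, so Harnack's inequality bounds its real
part below by `(1 - |z|) / (1 + |z|)`. Averaging the bounds at `(z, w)` and `(w, z)` cancels the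
fractions `(z + w) / (z - w)` and leaves a lower bound for
`Re ((z f'(z) - w f'(w)) / (f z - f w))`; for `w = q z` this is the real part of `z G'(z) / G(z)`,
and the lower bound exceeds `α` exactly below the positive root of a quadratic, namely `r_α`.
-/

open Topology Filter ComplexConjugate

section Dslope

variable {𝕜 E : Type*} [NontriviallyNormedField 𝕜] [NormedAddCommGroup E] [NormedSpace 𝕜 E]
  {f : 𝕜 → E} {a b : 𝕜}

theorem analyticAt_dslope_self (hf : AnalyticAt 𝕜 f a) : AnalyticAt 𝕜 (dslope f a) a :=
  let ⟨_, hp⟩ := hf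
  hp.has_fpower_series_dslope_fslope.analyticAt

theorem dslope_comm (f : 𝕜 → E) (a b : 𝕜) : dslope f a b = dslope f b a := by
  rcases eq_or_ne b a with rfl | hab
  · rfl
  · rw [dslope_of_ne f hab, dslope_of_ne f hab.symm, slope_comm]

variable [CompleteSpace E]

theorem deriv_deriv_eq_two_smul_deriv_dslope (hf : AnalyticAt 𝕜 f a) :
    deriv (deriv f) a = (2 : 𝕜) • deriv (dslope f a) a := by
  have hD := analyticAt_dslope_self hf
  have hf_eq : f = fun w ↦ (w - a) • dslope f a w + f a := by
    ext w
    rw [sub_smul_dslope, sub_add_cancel]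
  have hderiv : deriv f =ᶠ[𝓝 a] fun w ↦ (w - a) • deriv (dslope f a) w + dslope f a w := by
    filter_upwards [hD.eventually_analyticAt] with w hw
    conv_lhs => rw [hf_eq]
    simpa using
      ((((hasDerivAt_id w).sub_const a).smul hw.differentiableAt.hasDerivAt).add_const (f a)).deriv
  have hsum := (((hasDerivAt_id a).sub_const a).smul
    hD.deriv.differentiableAt.hasDerivAt).add hD.differentiableAt.hasDerivAt
  rw [hderiv.deriv_eq, two_smul]
  simpa [Pi.add_def, Pi.smul_def'] using hsum.deriv

-- Both sides are the divided difference `f[a, a, b]`; the right one is evidently analytic in `a`.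
theorem dslope_dslope_comm (hf : AnalyticAt 𝕜 f a) :
    dslope (dslope f a) a b = dslope (deriv f - dslope f b) b a := by
  rcases eq_or_ne b a with rfl | hab
  · have hD := (analyticAt_dslope_self hf).differentiableAt
    rw [dslope_same, dslope_same, deriv_sub hf.deriv.differentiableAt hD,
      deriv_deriv_eq_two_smul_deriv_dslope hf, two_smul, add_sub_cancel_right]
  · rw [dslope_of_ne _ hab, dslope_of_ne _ hab.symm, slope_comm]
    simp only [slope_def_module, Pi.sub_apply, dslope_same, dslope_comm f b a, sub_self]
    simp

end Dslope

section MaximumPrinciple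

variable {E : Type*} [NormedAddCommGroup E] [NormedSpace ℂ E] {h : E → ℂ} {U : Set E} {z : E}

theorem re_nonneg_of_forall_mem_frontier [Nontrivial E] (hU : Bornology.IsBounded U)
    (hh : DiffContOnCl ℂ h U) (hfr : ∀ w ∈ frontier U, 0 ≤ (h w).re) (hz : z ∈ closure U) :
    0 ≤ (h z).re := by
  have hexp : DiffContOnCl ℂ (fun w ↦ exp (-h w)) U :=
    differentiable_exp.comp_diffContOnCl hh.neg
  have hle : ‖exp (-h z)‖ ≤ 1 := norm_le_of_forall_mem_frontier_norm_le hU hexp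
    (fun w hw ↦ by simpa [norm_exp] using hfr w hw) hz
  simpa [norm_exp] using hle

theorem re_pos_of_forall_mem_frontier [Nontrivial E] (hU : Bornology.IsBounded U)
    (hUo : IsOpen U) (hUc : IsPreconnected U) (hh : DiffContOnCl ℂ h U)
    (hfr : ∀ w ∈ frontier U, 0 ≤ (h w).re) {w₀ : E} (hw₀ : w₀ ∈ closure U) (hpos : 0 < (h w₀).re)
    (hz : z ∈ U) : 0 < (h z).re := by
  have hnonneg : ∀ w ∈ closure U, 0 ≤ (h w).re := fun _ ↦
    re_nonneg_of_forall_mem_frontier hU hh hfr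
  refine (hnonneg z (subset_closure hz)).lt_of_ne' fun hz0 ↦ hpos.ne' ?_
  have hexp : DiffContOnCl ℂ (fun w ↦ exp (-h w)) U :=
    differentiable_exp.comp_diffContOnCl hh.neg
  have hmax : IsMaxOn (norm ∘ fun w ↦ exp (-h w)) U z := fun w hw ↦ by
    simpa [norm_exp, hz0] using hnonneg w (subset_closure hw)
  simpa [norm_exp, hz0] using
    norm_eqOn_closure_of_isPreconnected_of_isMaxOn hUc hUo hexp hz hmax hw₀

end MaximumPrinciple

theorem norm_sub_one_le_norm_add_one {w : ℂ} (hw : 0 ≤ w.re) : ‖w - 1‖ ≤ ‖w + 1‖ := by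
  rw [← sq_le_sq₀ (norm_nonneg _) (norm_nonneg _), Complex.sq_norm, Complex.sq_norm, normSq_sub,
    normSq_add]
  simp only [map_one, mul_one]
  linarith

-- Harnack's inequality, from the Schwarz lemma applied to the Cayley transform of `p`.
theorem div_le_re_of_re_nonneg {p : ℂ → ℂ} {c z : ℂ} {R : ℝ}
    (hp : DifferentiableOn ℂ p (ball c R)) (hpc : p c = 1)
    (hre : ∀ w ∈ ball c R, 0 ≤ (p w).re) (hz : z ∈ ball c R) :
    (R - ‖z - c‖) / (R + ‖z - c‖) ≤ (p z).re := by
  have hR : 0 < R := dist_nonneg.trans_lt hz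
  have hne : ∀ w ∈ ball c R, p w + 1 ≠ 0 := fun w hw h ↦ by
    have hre_eq : (p w).re = -1 := by rw [eq_neg_of_add_eq_zero_left h, neg_re, one_re]
    linarith [hre w hw]
  set φ : ℂ → ℂ := fun w ↦ (p w - 1) / (p w + 1) with hφ
  have hmaps : MapsTo φ (ball c R) (closedBall (φ c) 1) := fun w hw ↦ by
    simpa [hφ, hpc] using
      div_le_one_of_le₀ (norm_sub_one_le_norm_add_one (hre w hw)) (norm_nonneg _)
  have hschwarz : ‖φ z‖ ≤ ‖z - c‖ / R := by
    have := dist_le_div_mul_dist_of_mapsTo_ball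
      ((hp.sub_const 1).div (hp.add_const 1) hne) hmaps hz
    simpa [hφ, hpc, dist_eq_norm, div_eq_inv_mul] using this
  have hφ1 : ‖φ z‖ < 1 :=
    hschwarz.trans_lt ((div_lt_one hR).2 (mem_ball_iff_norm.1 hz))
  have hpz : p z = (1 + φ z) / (1 - φ z) := by
    have := hne z hz
    simp only [hφ]
    field_simp
    ring
  calc (R - ‖z - c‖) / (R + ‖z - c‖) = (1 - ‖z - c‖ / R) / (1 + ‖z - c‖ / R) := by field_simp
    _ ≤ (1 - ‖φ z‖) / (1 + ‖φ z‖) := by gcongr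
    _ ≤ ((1 + φ z) / (1 - φ z)).re := by
      simpa using le_re_herglotzRieszKernel (c := 0) (z := 1) (w := φ z) (R := 1)
        (by simp) (by simpa using hφ1)
    _ = (p z).re := by rw [hpz]

theorem pos_of_hasDerivAt_mul_sin {g A ψ : ℝ → ℝ} {a b : ℝ} (hψ : StrictMonoOn ψ (Icc a b))
    (hψc : ContinuousOn ψ (Icc a b)) (hψa : ψ a = 0) (hψb : ψ b = 2 * Real.pi)
    (hgc : ContinuousOn g (Icc a b)) (hA : ∀ x ∈ Ioo a b, 0 < A x)
    (hg : ∀ x ∈ Ioo a b, HasDerivAt g (A x * Real.sin (ψ x)) x) (hga : g a = 0) (hgb : g b = 0)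
    {x : ℝ} (hx : x ∈ Ioo a b) : 0 < g x := by
  have hab : a ≤ b := (hx.1.trans hx.2).le
  have ha := left_mem_Icc.2 hab
  have hb := right_mem_Icc.2 hab
  obtain ⟨m, hm, hψm⟩ : Real.pi ∈ ψ '' Icc a b :=
    intermediate_value_Icc hab hψc ⟨by rw [hψa]; positivity, by rw [hψb]; linarith [Real.pi_pos]⟩
  have hleft : StrictMonoOn g (Icc a m) := by
    refine strictMonoOn_of_deriv_pos (convex_Icc a m)
      (hgc.mono (Icc_subset_Icc_right hm.2)) fun y hy ↦ ?_
    rw [interior_Icc] at hy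
    have hy' : y ∈ Ioo a b := ⟨hy.1, hy.2.trans_le hm.2⟩
    rw [(hg y hy').deriv]
    refine mul_pos (hA y hy') (Real.sin_pos_of_pos_of_lt_pi ?_ ?_)
    · exact hψa ▸ hψ ha (Ioo_subset_Icc_self hy') hy.1
    · exact hψm ▸ hψ (Ioo_subset_Icc_self hy') hm hy.2
  have hright : StrictAntiOn g (Icc m b) := by
    refine strictAntiOn_of_deriv_neg (convex_Icc m b)
      (hgc.mono (Icc_subset_Icc_left hm.1)) fun y hy ↦ ?_
    rw [interior_Icc] at hy
    have hy' : y ∈ Ioo a b := ⟨hm.1.trans_lt hy.1, hy.2⟩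
    have hlt : Real.pi < ψ y := hψm ▸ hψ hm (Ioo_subset_Icc_self hy') hy.1
    have hlt' : ψ y < 2 * Real.pi := hψb ▸ hψ (Ioo_subset_Icc_self hy') hb hy.2
    rw [(hg y hy').deriv, ← Real.sin_sub_two_pi]
    exact mul_neg_of_pos_of_neg (hA y hy')
      (Real.sin_neg_of_neg_of_neg_pi_lt (by linarith) (by linarith))
  rcases le_total x m with hxm | hmx
  · exact hga ▸ hleft ⟨le_rfl, hm.1⟩ ⟨hx.1.le, hxm⟩ hx.1
  · exact hgb ▸ hright ⟨hmx, hx.2.le⟩ ⟨hm.2, le_rfl⟩ hx.2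

theorem exists_hasDerivAt_logDeriv_and_exp_eq {g : ℂ → ℂ} {c : ℂ} {R : ℝ}
    (hg : DifferentiableOn ℂ g (ball c R)) (hg0 : ∀ z ∈ ball c R, g z ≠ 0) :
    ∃ L : ℂ → ℂ, ∀ z ∈ ball c R, HasDerivAt L (logDeriv g z) z ∧ exp (L z) = g z := by
  have hlog : DifferentiableOn ℂ (logDeriv g) (ball c R) := (hg.deriv isOpen_ball).div hg hg0
  obtain ⟨L, hLc, hL⟩ := hlog.isExactOn_ball.with_val_at c (log (g c))
  refine ⟨L, fun z hz ↦ ⟨hL z hz, ?_⟩⟩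
  have hc : c ∈ ball c R := mem_ball_self (dist_nonneg.trans_lt hz)
  have hLd : DifferentiableOn ℂ (fun w ↦ exp (L w)) (ball c R) := fun w hw ↦
    (hL w hw).cexp.differentiableAt.differentiableWithinAt
  obtain ⟨k, -, hk⟩ := (logDeriv_eqOn_iff hLd hg isOpen_ball (convex_ball c R).isPreconnected
    hg0 fun w _ ↦ exp_ne_zero _).1 fun w hw ↦ by
      rw [logDeriv_apply, (hL w hw).cexp.deriv, mul_div_cancel_left₀ _ (exp_ne_zero _)]
  have hkc := hk hc
  have hk1 : k = 1 := by
    simpa [hLc, exp_log (hg0 c hc), hg0 c hc, eq_comm] using hkc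
  simpa [hk1] using hk hz

theorem exp_mul_conj_exp_im (a b : ℂ) :
    (exp a * conj (exp b)).im = Real.exp (a.re + b.re) * Real.sin (a.im - b.im) := by
  rw [← exp_conj, ← exp_add, exp_im]
  simp [sub_eq_add_neg]

theorem re_add_div_sub_eq_zero {z ζ : ℂ} (h : ‖z‖ = ‖ζ‖) : ((z + ζ) / (z - ζ)).re = 0 := by
  simpa [poissonKernel_def, herglotzRieszKernel, h] using
    (congrFun (poissonKernel_eq_re_herglotzRieszKernel (c := 0) (w := ζ)) z).symm

/-- Convex functions on `𝔻` without normalization: `IsConvexFn` minus the conditions `f 0 = 0` and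
`f' 0 = 1`. -/
structure IsConvexMap (f : ℂ → ℂ) : Prop where
  differentiableOn : DifferentiableOn ℂ f 𝔻
  deriv_ne_zero : ∀ z ∈ 𝔻, deriv f z ≠ 0
  re_pos : ∀ z ∈ 𝔻, 0 < (1 + z * deriv (deriv f) z / deriv f z).re

theorem IsConvexFn.isConvexMap {f : ℂ → ℂ} (hf : IsConvexFn f) : IsConvexMap f :=
  ⟨hf.1.1, hf.2.1, hf.2.2⟩

theorem mem_unitDisk {z : ℂ} : z ∈ 𝔻 ↔ ‖z‖ < 1 := mem_ball_zero_iff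

theorem isOpen_unitDisk : IsOpen 𝔻 := isOpen_ball

theorem diffContOnCl_ball_of_unitDisk {h : ℂ → ℂ} (hh : DifferentiableOn ℂ h 𝔻) {r : ℝ}
    (hr : r < 1) : DiffContOnCl ℂ h (ball 0 r) :=
  (hh.mono (closedBall_subset_ball hr)).diffContOnCl_ball le_rfl

theorem forall_mem_frontier_ball_zero {p : ℂ → Prop} {r : ℝ} (h : ∀ w, ‖w‖ = r → p w) :
    ∀ w ∈ frontier (ball (0 : ℂ) r), p w := fun w hw ↦
  h w (by simpa using frontier_ball_subset_sphere hw)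

namespace IsConvexMap

variable {f : ℂ → ℂ} {z ζ : ℂ}

theorem hasDerivAt (hf : IsConvexMap f) (hz : z ∈ 𝔻) : HasDerivAt f (deriv f z) z :=
  (hf.differentiableOn.differentiableAt (isOpen_unitDisk.mem_nhds hz)).hasDerivAt

theorem analyticAt (hf : IsConvexMap f) (hz : z ∈ 𝔻) : AnalyticAt ℂ f z :=
  hf.differentiableOn.analyticAt (isOpen_unitDisk.mem_nhds hz)

theorem exists_log_circleMap_mul_deriv (hf : IsConvexMap f) {r : ℝ} (hr₀ : 0 < r) (hr₁ : r < 1) :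
    ∃ ℓ : ℝ → ℂ, Continuous ℓ ∧ StrictMono (fun θ ↦ (ℓ θ).im) ∧
      (∀ θ, ℓ (θ + 2 * Real.pi) = ℓ θ + 2 * Real.pi * I) ∧
      ∀ θ, exp (ℓ θ) = circleMap 0 r θ * deriv f (circleMap 0 r θ) := by
  have hc : ∀ θ, circleMap 0 r θ ∈ 𝔻 := fun θ ↦ by
    simpa [mem_unitDisk, abs_of_pos hr₀] using hr₁
  obtain ⟨L, hL⟩ := exists_hasDerivAt_logDeriv_and_exp_eq
    (hf.differentiableOn.deriv isOpen_unitDisk) hf.deriv_ne_zero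
  set ℓ : ℝ → ℂ := fun θ ↦ Real.log r + θ * I + L (circleMap 0 r θ) with hℓ
  have hder : ∀ θ, HasDerivAt ℓ ((1 + circleMap 0 r θ *
      deriv (deriv f) (circleMap 0 r θ) / deriv f (circleMap 0 r θ)) * I) θ := fun θ ↦ by
    have hLc := (hL _ (hc θ)).1.comp θ (hasDerivAt_circleMap 0 r θ)
    refine ((((hasDerivAt_id θ).ofReal_comp.mul_const I).const_add _).add hLc).congr_deriv ?_
    rw [logDeriv_apply]
    push_cast
    ring
  refine ⟨ℓ, continuous_iff_continuousAt.2 fun θ ↦ (hder θ).continuousAt, ?_, fun θ ↦ ?_,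
    fun θ ↦ ?_⟩
  · refine strictMono_of_deriv_pos fun θ ↦ ?_
    have him := imCLM.hasFDerivAt.comp_hasDerivAt θ (hder θ)
    have hpos := hf.re_pos _ (hc θ)
    rwa [← mul_I_im, ← imCLM_apply, ← him.deriv] at hpos
  · simp only [hℓ, periodic_circleMap 0 r θ]
    push_cast
    ring
  · simp only [hℓ]
    rw [exp_add, exp_add, (hL _ (hc θ)).2, ← ofReal_exp, Real.exp_log hr₀, circleMap_zero]

theorem hasDerivAt_re_chord (hf : IsConvexMap f) {r θ : ℝ} (hr : circleMap 0 r θ ∈ 𝔻) (a w : ℂ) :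
    HasDerivAt (fun t : ℝ ↦ ((a - f (circleMap 0 r t)) * w).re)
      (circleMap 0 r θ * deriv f (circleMap 0 r θ) * w).im θ := by
  have hchord := (((hf.hasDerivAt hr).comp θ (hasDerivAt_circleMap 0 r θ)).const_sub a).mul_const w
  refine (reCLM.hasFDerivAt.comp_hasDerivAt θ hchord).congr_deriv ?_
  rw [reCLM_apply, ← neg_neg (im _), ← mul_I_re, ← neg_re]
  congr 1
  ring

theorem re_chord_pos_of_norm_eq (hf : IsConvexMap f) (hz : z ∈ 𝔻) (hζz : ‖ζ‖ = ‖z‖)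
    (hne : ζ ≠ z) : 0 < ((f z - f ζ) * conj (z * deriv f z)).re := by
  have hz₀ : 0 < ‖z‖ := norm_pos_iff.2 fun hz₀ ↦ hne <| by simpa [hz₀] using hζz
  obtain ⟨ℓ, hℓc, hℓmono, hℓper, hℓexp⟩ :=
    hf.exists_log_circleMap_mul_deriv hz₀ (mem_unitDisk.1 hz)
  obtain ⟨φ, hφ⟩ : z ∈ range (circleMap 0 ‖z‖) := by simp
  obtain ⟨θ, hθ, hθζ⟩ : ζ ∈ circleMap 0 ‖z‖ '' Ioc φ (φ + 2 * Real.pi) := by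
    rw [(periodic_circleMap 0 ‖z‖).image_Ioc Real.two_pi_pos, range_circleMap]
    simpa using hζz
  have hθ' : θ < φ + 2 * Real.pi := hθ.2.lt_of_ne <| by
    rintro rfl
    exact hne (by rw [← hθζ, periodic_circleMap, hφ])
  set g : ℝ → ℝ := fun t ↦ ((f z - f (circleMap 0 ‖z‖ t)) * conj (z * deriv f z)).re with hg
  have hg_deriv : ∀ t, HasDerivAt g
      (Real.exp ((ℓ t).re + (ℓ φ).re) * Real.sin ((ℓ t).im - (ℓ φ).im)) t := fun t ↦ by
    have ht : circleMap 0 ‖z‖ t ∈ 𝔻 := by simpa [mem_unitDisk] using hz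
    refine (hf.hasDerivAt_re_chord ht _ _).congr_deriv ?_
    rw [← exp_mul_conj_exp_im, hℓexp, hℓexp, hφ]
  suffices hgθ : 0 < g θ by simpa only [hg, hθζ] using hgθ
  refine pos_of_hasDerivAt_mul_sin (ψ := fun t ↦ (ℓ t).im - (ℓ φ).im)
    (fun s _ t _ hst ↦ sub_lt_sub_right (hℓmono hst) _)
    (by fun_prop) (sub_self _) (by simp [hℓper])
    (fun t _ ↦ (hg_deriv t).continuousAt.continuousWithinAt)
    (fun t _ ↦ Real.exp_pos _) (fun t _ ↦ hg_deriv t) (by simp [hg, hφ])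
    (by simp [hg, periodic_circleMap 0 ‖z‖ φ, hφ]) ⟨hθ.1, hθ'⟩

theorem re_chord_pos (hf : IsConvexMap f) (hz : z ∈ 𝔻) (hζz : ‖ζ‖ ≤ ‖z‖) (hne : ζ ≠ z) :
    0 < ((f z - f ζ) * conj (z * deriv f z)).re := by
  rcases hζz.eq_or_lt with heq | hlt
  · exact hf.re_chord_pos_of_norm_eq hz heq hne
  have hz₁ := mem_unitDisk.1 hz
  have hz₀ : z ≠ 0 := norm_pos_iff.1 ((norm_nonneg ζ).trans_lt hlt)
  refine re_pos_of_forall_mem_frontier (h := fun w ↦ (f z - f w) * conj (z * deriv f z)) (w₀ := -z)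
    isBounded_ball isOpen_ball (convex_ball 0 ‖z‖).isPreconnected
    (diffContOnCl_ball_of_unitDisk ((hf.differentiableOn.const_sub _).mul_const _) hz₁)
    (forall_mem_frontier_ball_zero fun w hw ↦ ?_) ?_
    (hf.re_chord_pos_of_norm_eq hz (norm_neg z) (by simpa [neg_eq_self] using hz₀))
    (mem_ball_zero_iff.2 hlt)
  · rcases eq_or_ne w z with rfl | hwz
    · simp
    · exact (hf.re_chord_pos_of_norm_eq hz hw hwz).le
  · simp [closure_ball _ (norm_ne_zero_iff.2 hz₀)]

theorem injOn (hf : IsConvexMap f) : InjOn f 𝔻 := by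
  intro z hz ζ hζ heq
  by_contra hne
  wlog hle : ‖ζ‖ ≤ ‖z‖ generalizing z ζ
  · exact this hζ hz heq.symm (Ne.symm hne) (le_of_not_ge hle)
  · simpa [heq] using hf.re_chord_pos hz hle (Ne.symm hne)

theorem dslope_ne_zero (hf : IsConvexMap f) (hz : z ∈ 𝔻) (hζ : ζ ∈ 𝔻) : dslope f z ζ ≠ 0 := by
  rcases eq_or_ne ζ z with rfl | hne
  · rw [dslope_same]
    exact hf.deriv_ne_zero ζ hζ
  · rw [dslope_of_ne f hne, slope_def_field]
    exact div_ne_zero (sub_ne_zero.2 (hf.injOn.ne hζ hz hne)) (sub_ne_zero.2 hne)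

end IsConvexMap

theorem differentiableOn_dslope_unitDisk {h : ℂ → ℂ} (hh : DifferentiableOn ℂ h 𝔻) {z : ℂ}
    (hz : z ∈ 𝔻) : DifferentiableOn ℂ (dslope h z) 𝔻 :=
  (differentiableOn_dslope (isOpen_unitDisk.mem_nhds hz)).2 hh

/-- Suffridge's kernel `2 z f'(z) / (f z - f ζ) - (z + ζ) / (z - ζ)`, whose nonnegativity on the
bidisk expresses convexity of `f`. Writing it with second divided differences fills in the
removable singularity on the diagonal. -/
def suffridgeKernel (f : ℂ → ℂ) (z ζ : ℂ) : ℂ :=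
  1 + 2 * z * dslope (dslope f z) z ζ / dslope f z ζ

theorem suffridgeKernel_of_ne {f : ℂ → ℂ} {z ζ : ℂ} (hne : z ≠ ζ) (hf : f z ≠ f ζ) :
    suffridgeKernel f z ζ = 2 * (z * deriv f z) / (f z - f ζ) - (z + ζ) / (z - ζ) := by
  have hsub := sub_ne_zero.2 hne.symm
  have hfsub := sub_ne_zero.2 hf.symm
  rw [suffridgeKernel, dslope_of_ne _ hne.symm, dslope_of_ne _ hne.symm, slope_def_field,
    slope_def_field, dslope_same, dslope_of_ne _ hne.symm, slope_def_field, ← neg_sub (f ζ) (f z),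
    ← neg_sub ζ z]
  field_simp
  ring

theorem suffridgeKernel_self {f : ℂ → ℂ} {z : ℂ} (hf : AnalyticAt ℂ f z) :
    suffridgeKernel f z z = 1 + z * deriv (deriv f) z / deriv f z := by
  rw [suffridgeKernel, dslope_same, dslope_same, deriv_deriv_eq_two_smul_deriv_dslope hf,
    smul_eq_mul]
  ring

@[simp]
theorem suffridgeKernel_zero_left (f : ℂ → ℂ) (ζ : ℂ) : suffridgeKernel f 0 ζ = 1 := by
  simp [suffridgeKernel]

namespace IsConvexMap

variable {f : ℂ → ℂ} {z ζ : ℂ}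

theorem differentiableOn_suffridgeKernel_right (hf : IsConvexMap f) (hz : z ∈ 𝔻) :
    DifferentiableOn ℂ (suffridgeKernel f z) 𝔻 := by
  have hd := differentiableOn_dslope_unitDisk hf.differentiableOn hz
  exact (((differentiableOn_dslope_unitDisk hd hz).const_mul (2 * z)).div hd
    fun w hw ↦ hf.dslope_ne_zero hz hw).const_add 1

theorem differentiableOn_suffridgeKernel_left (hf : IsConvexMap f) (hζ : ζ ∈ 𝔻) :
    DifferentiableOn ℂ (fun w ↦ suffridgeKernel f w ζ) 𝔻 := by
  have hd := differentiableOn_dslope_unitDisk hf.differentiableOn hζ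
  have hdd := differentiableOn_dslope_unitDisk
    ((hf.differentiableOn.deriv isOpen_unitDisk).sub hd) hζ
  refine ((((differentiableOn_id.const_mul 2).mul hdd).div hd
    fun w hw ↦ hf.dslope_ne_zero hζ hw).const_add 1).congr fun w hw ↦ ?_
  rw [suffridgeKernel, dslope_dslope_comm (hf.analyticAt hw), dslope_comm f w ζ]
  rfl

theorem re_suffridgeKernel_nonneg_of_norm_eq (hf : IsConvexMap f) (hz : z ∈ 𝔻)
    (hζz : ‖ζ‖ = ‖z‖) : 0 ≤ (suffridgeKernel f z ζ).re := by
  rcases eq_or_ne ζ z with rfl | hne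
  · rw [suffridgeKernel_self (hf.analyticAt hz)]
    exact (hf.re_pos ζ hz).le
  have hζ : ζ ∈ 𝔻 := mem_unitDisk.2 (hζz.trans_lt (mem_unitDisk.1 hz))
  have hchord := hf.re_chord_pos hz hζz.le hne
  have hquot : 0 ≤ (z * deriv f z / (f z - f ζ)).re := by
    rw [div_eq_mul_inv, inv_def, ← mul_assoc, re_mul_ofReal, ← conj_re, map_mul, conj_conj,
      mul_comm (conj _)]
    exact mul_nonneg hchord.le (inv_nonneg.2 (normSq_nonneg _))
  rw [suffridgeKernel_of_ne hne.symm (hf.injOn.ne hz hζ hne.symm), sub_re,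
    re_add_div_sub_eq_zero hζz.symm, sub_zero, mul_div_assoc, ← ofReal_ofNat, re_ofReal_mul]
  positivity

theorem re_suffridgeKernel_nonneg_of_norm_le (hf : IsConvexMap f) (hz : z ∈ 𝔻)
    (hζz : ‖ζ‖ ≤ ‖z‖) : 0 ≤ (suffridgeKernel f z ζ).re := by
  rcases eq_or_ne z 0 with rfl | hz₀
  · simp
  refine re_nonneg_of_forall_mem_frontier isBounded_ball
    (diffContOnCl_ball_of_unitDisk (hf.differentiableOn_suffridgeKernel_right hz)
      (mem_unitDisk.1 hz))
    (forall_mem_frontier_ball_zero fun w hw ↦ hf.re_suffridgeKernel_nonneg_of_norm_eq hz hw) ?_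
  rw [closure_ball _ (norm_ne_zero_iff.2 hz₀)]
  exact mem_closedBall_zero_iff.2 hζz

theorem re_suffridgeKernel_nonneg (hf : IsConvexMap f) (hz : z ∈ 𝔻) (hζ : ζ ∈ 𝔻) :
    0 ≤ (suffridgeKernel f z ζ).re := by
  obtain ⟨ρ, hρ, hρ₁⟩ := exists_between (max_lt (mem_unitDisk.1 hz) (mem_unitDisk.1 hζ))
  obtain ⟨hzρ, hζρ⟩ := max_lt_iff.1 hρ
  refine re_nonneg_of_forall_mem_frontier (h := fun w ↦ suffridgeKernel f w ζ) isBounded_ball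
    (diffContOnCl_ball_of_unitDisk (hf.differentiableOn_suffridgeKernel_left hζ) hρ₁)
    (forall_mem_frontier_ball_zero fun w hw ↦ ?_) (subset_closure (mem_ball_zero_iff.2 hzρ))
  exact hf.re_suffridgeKernel_nonneg_of_norm_le (mem_unitDisk.2 (hw.trans_lt hρ₁))
    (hζρ.le.trans hw.ge)

theorem div_le_re_suffridgeKernel (hf : IsConvexMap f) (hz : z ∈ 𝔻) (hζ : ζ ∈ 𝔻) :
    (1 - ‖z‖) / (1 + ‖z‖) ≤ (suffridgeKernel f z ζ).re := by
  simpa using div_le_re_of_re_nonneg (hf.differentiableOn_suffridgeKernel_left hζ)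
    (suffridgeKernel_zero_left f ζ) (fun w hw ↦ hf.re_suffridgeKernel_nonneg hw hζ) hz

theorem div_le_re_sub_div_sub (hf : IsConvexMap f) (hz : z ∈ 𝔻) (hζ : ζ ∈ 𝔻) (hne : z ≠ ζ) :
    (1 - ‖z‖ * ‖ζ‖) / ((1 + ‖z‖) * (1 + ‖ζ‖)) ≤
      ((z * deriv f z - ζ * deriv f ζ) / (f z - f ζ)).re := by
  have hfne := hf.injOn.ne hz hζ hne
  have hsum : suffridgeKernel f z ζ + suffridgeKernel f ζ z =
      (2 : ℝ) * ((z * deriv f z - ζ * deriv f ζ) / (f z - f ζ)) := by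
    rw [suffridgeKernel_of_ne hne hfne, suffridgeKernel_of_ne hne.symm hfne.symm,
      ← neg_sub z ζ, ← neg_sub (f z) (f ζ), div_neg, div_neg]
    push_cast
    ring
  have hre := congrArg re hsum
  rw [add_re, re_ofReal_mul] at hre
  have hz' := hf.div_le_re_suffridgeKernel hz hζ
  have hζ' := hf.div_le_re_suffridgeKernel hζ hz
  have hmean : (1 - ‖z‖ * ‖ζ‖) / ((1 + ‖z‖) * (1 + ‖ζ‖)) =
      ((1 - ‖z‖) / (1 + ‖z‖) + (1 - ‖ζ‖) / (1 + ‖ζ‖)) / 2 := by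
    field_simp
    ring
  linarith

end IsConvexMap

section Radius

variable {q α r : ℝ}

theorem neg_one_lt_one_sub_div (hq : 0 < q) : -1 < (1 - q) / (2 * (1 + q)) := by
  rw [lt_div_iff₀ (by positivity)]
  linarith

theorem radius_le_one (hq : 0 < q) (hα : (1 - q) / (2 * (1 + q)) ≤ α) :
    (√(α ^ 2 * (1 - q) ^ 2 + 4 * q) - α * (1 + q)) / (2 * q * (1 + α)) ≤ 1 := by
  have h1α : 0 < 1 + α := by linarith [neg_one_lt_one_sub_div hq]
  have hcoef : 0 ≤ q + 2 * α * q + 2 * α - 1 := by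
    rw [div_le_iff₀ (by positivity)] at hα
    linarith
  rw [div_le_one (by positivity), sub_le_iff_le_add]
  refine Real.sqrt_le_iff.2 ⟨by nlinarith, ?_⟩
  nlinarith [mul_nonneg (mul_pos hq h1α).le hcoef]

theorem lt_div_of_lt_radius (hq : 0 < q) (hα : -1 < α) (hr : 0 ≤ r)
    (h : r < (√(α ^ 2 * (1 - q) ^ 2 + 4 * q) - α * (1 + q)) / (2 * q * (1 + α))) :
    α < (1 - r * (q * r)) / ((1 + r) * (1 + q * r)) := by
  have h1α : 0 < 1 + α := by linarith
  set D := α ^ 2 * (1 - q) ^ 2 + 4 * q with hD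
  have hlt : 2 * q * (1 + α) * r + α * (1 + q) < √D := by
    rw [lt_div_iff₀ (by positivity)] at h
    linarith
  have hneg : -√D < 2 * q * (1 + α) * r + α * (1 + q) := by
    have hcoef : 0 ≤ 2 * q * (1 + α) * r := by positivity
    rcases le_or_gt 0 α with hα₀ | hα₀
    · have : 0 ≤ α * (1 + q) := by positivity
      linarith [Real.sqrt_nonneg D]
    · have : -(α * (1 + q)) < √D := Real.lt_sqrt_of_sq_lt <| by
        nlinarith [mul_pos hq (mul_pos h1α (show 0 < 1 - α by linarith))]
      linarith
  have hsq : (2 * q * (1 + α) * r + α * (1 + q)) ^ 2 < D := by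
    rw [← Real.sq_sqrt (show 0 ≤ D by positivity)]
    exact sq_lt_sq' hneg hlt
  have hquad : 4 * q * (1 + α) * (q * (1 + α) * r ^ 2 + α * (1 + q) * r - (1 - α)) < 0 := by
    linarith
  have hquad' := (pos_iff_neg_of_mul_neg hquad).1 (by positivity)
  rw [lt_div_iff₀ (by positivity)]
  linarith

end Radius

theorem deriv_sub_comp_const_mul_div {f : ℂ → ℂ} {q z : ℂ} (hz : DifferentiableAt ℂ f z)
    (hqz : DifferentiableAt ℂ f (q * z)) (c : ℂ) :
    deriv (fun w ↦ (f w - f (q * w)) / c) z = (deriv f z - q * deriv f (q * z)) / c := by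
  have hq := hqz.hasDerivAt.comp z ((hasDerivAt_id z).const_mul q)
  simpa [mul_comm] using ((hz.hasDerivAt.sub hq).div_const c).deriv

theorem stmt14_general (q : ℂ) (hq0 : q ≠ 0) (hq : ‖q‖ ≤ 1) (hq1 : q ≠ 1) (α : ℝ) (hα : -1 < α)
    (f : ℂ → ℂ) (hf : IsConvexMap f) (z : ℂ) (hz₀ : 0 < ‖z‖) (hz₁ : ‖z‖ < 1)
    (hzr : ‖z‖ < (√(α ^ 2 * (1 - ‖q‖) ^ 2 + 4 * ‖q‖) - α * (1 + ‖q‖)) / (2 * ‖q‖ * (1 + α))) :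
    (f z - f (q * z)) / (1 - q) ≠ 0 ∧
      α < (z * deriv (fun w ↦ (f w - f (q * w)) / (1 - q)) z /
        ((f z - f (q * z)) / (1 - q))).re := by
  have hz : z ∈ 𝔻 := mem_unitDisk.2 hz₁
  have hqz : q * z ∈ 𝔻 := mem_unitDisk.2 <| by
    rw [norm_mul]
    exact (mul_le_of_le_one_left hz₀.le hq).trans_lt hz₁
  have hne : z ≠ q * z := fun h ↦ hq1 ((mul_eq_right₀ (norm_pos_iff.1 hz₀)).1 h.symm)
  have h1q : 1 - q ≠ 0 := sub_ne_zero.2 hq1.symm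
  refine ⟨div_ne_zero (sub_ne_zero.2 (hf.injOn.ne hz hqz hne)) h1q, ?_⟩
  rw [deriv_sub_comp_const_mul_div (hf.analyticAt hz).differentiableAt
    (hf.analyticAt hqz).differentiableAt, mul_div_assoc', div_div_div_cancel_right₀ h1q, mul_sub,
    mul_left_comm, ← mul_assoc q]
  refine (lt_div_of_lt_radius (norm_pos_iff.2 hq0) hα hz₀.le hzr).trans_le ?_
  simpa only [norm_mul] using hf.div_le_re_sub_div_sub hz hqz hne

theorem stmt14 (q α : ℝ) (hq0 : 0 < q) (hq1 : q < 1)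
    (hα1 : (1 - q)/(2*(1+q)) ≤ α) (hα2 : α < 1)
    (f : ℂ → ℂ) (hf : IsConvexFn f) :
    ∀ z : ℂ, 0 < ‖z‖ →
      ‖z‖ < (Real.sqrt (α^2*(1-q)^2 + 4*q) - α*(1+q)) / (2*q*(1+α)) →
      (f z - f ((q:ℂ)*z)) / (1 - (q:ℂ)) ≠ 0 ∧
        α < (z * deriv (fun w => (f w - f ((q:ℂ)*w)) / (1 - (q:ℂ))) z /
          ((f z - f ((q:ℂ)*z)) / (1 - (q:ℂ)))).re := by
  intro z hz₀ hzr
  simpa [abs_of_pos hq0] using stmt14_general q (mod_cast hq0.ne')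
    (by simpa [abs_of_pos hq0] using hq1.le) (mod_cast hq1.ne) α
    ((neg_one_lt_one_sub_div hq0).trans_le hα1) f hf.isConvexMap z hz₀
    (hzr.trans_le (radius_le_one hq0 hα1)) (by simpa [abs_of_pos hq0] using hzr)
end
end
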